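/- Fix 1 ≤ p ≤ ∞ and integers d ≥ 4 and 3 ≤ k ≤ d. Then H^p(𝕋^d) enjoys the contractive restriction property of dimension k if and only if p is not an even integer (i.e., p ∉ {2, 4, 6, ...}; in particular the property holds for p = ∞). -/

import Mathlib

open MeasureTheory
open scoped Classical ENNReal

noncomputable section

/-- The `d`-dimensional torus, modelled as `d` copies of `ℝ/ℤ`,
whose product `volume` measure is the normalized Haar measure. -/
abbrev Torus (d : ℕ) := Fin d → AddCircle (1 : ℝ)

/-- The character `z ↦ z^α` on the torus. -/
def torusChar {d : ℕ} (α : Fin d → ℤ) (x : Torus d) : ℂ :=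
  ∏ j, fourier (α j) (x j)

/-- The trigonometric polynomial with frequencies in `F` and coefficients `a`. -/
def trigPoly {d : ℕ} (F : Finset (Fin d → ℤ)) (a : (Fin d → ℤ) → ℂ) (x : Torus d) : ℂ :=
  ∑ α ∈ F, a α * torusChar α x

/-- The set `ℕ₀^d` of multi-indices with nonnegative entries. -/
def NN (d : ℕ) : Set (Fin d → ℤ) := {α | ∀ j, 0 ≤ α j}

/-- `Λ` is a coset in `ℤ^d`, i.e. a translate of a subgroup. -/
def IsCoset {d : ℕ} (Λ : Set (Fin d → ℤ)) : Prop :=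
  ∃ (x : Fin d → ℤ) (H : AddSubgroup (Fin d → ℤ)),
    Λ = (x + ·) '' (H : Set (Fin d → ℤ))

/-- `Λ` is a contractive projection set for `L^p(𝕋^d)`:
the projection onto frequencies in `Λ` is contractive on trigonometric polynomials. -/
def IsContractiveLp (d : ℕ) (p : ℝ≥0∞) (Λ : Set (Fin d → ℤ)) : Prop :=
  ∀ (F : Finset (Fin d → ℤ)) (a : (Fin d → ℤ) → ℂ),
    eLpNorm (trigPoly (F.filter (· ∈ Λ)) a) p volume ≤ eLpNorm (trigPoly F a) p volume

/-- `Γ` is a contractive projection set for `H^p(𝕋^d)`: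
the projection onto frequencies in `Γ` is contractive on analytic polynomials. -/
def IsContractiveHp (d : ℕ) (p : ℝ≥0∞) (Γ : Set (Fin d → ℤ)) : Prop :=
  ∀ F : Finset (Fin d → ℤ), ↑F ⊆ NN d → ∀ a : (Fin d → ℤ) → ℂ,
    eLpNorm (trigPoly (F.filter (· ∈ Γ)) a) p volume ≤ eLpNorm (trigPoly F a) p volume

/-- `Γ` has dimension `k`: the subgroup generated by the differences `γ - γ₀` has rank `k`. -/
def HasDim {d : ℕ} (Γ : Set (Fin d → ℤ)) (k : ℕ) : Prop :=
  ∀ γ₀ ∈ Γ, Module.finrank ℤ (Submodule.span ℤ ((· - γ₀) '' Γ)) = k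

/-- `H^p(𝕋^d)` enjoys the contractive restriction property of dimension `k`:
every `k`-dimensional contractive projection set for `H^p(𝕋^d)` is the restriction
of a coset in `ℤ^d` to `ℕ₀^d`. -/
def ContractiveRestrictionProperty (d : ℕ) (p : ℝ≥0∞) (k : ℕ) : Prop :=
  ∀ Γ : Set (Fin d → ℤ), Γ.Nonempty → Γ ⊆ NN d → HasDim Γ k → IsContractiveHp d p Γ →
    ∃ Λ : Set (Fin d → ℤ), IsCoset Λ ∧ Γ = Λ ∩ NN d

/-- The coset `Λ(Γ)` in `ℤ^d` generated by `Γ`. -/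
def cosetGen {d : ℕ} (Γ : Set (Fin d → ℤ)) : Set (Fin d → ℤ) :=
  ⋃ γ₀ ∈ Γ, (γ₀ + ·) '' (AddSubgroup.closure ((· - γ₀) '' Γ) : Set (Fin d → ℤ))

/-- The `n`-extension `E_n(Γ)`: all points of `Λ(Γ) ∩ ℕ₀^d` at distance at most `n` from `Γ`. -/
def Eext {d : ℕ} (n : ℕ) (Γ : Set (Fin d → ℤ)) : Set (Fin d → ℤ) :=
  {lam | lam ∈ cosetGen Γ ∩ NN d ∧ ∃ γ ∈ Γ, ∃ m : (Fin d → ℤ) →₀ ℤ,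
    (↑m.support : Set (Fin d → ℤ)) ⊆ Γ \ {γ} ∧
    lam = γ + ∑ α ∈ m.support, m α • (α - γ) ∧
    (∑ α ∈ m.support, max (m α) 0) ≤ (n : ℤ) ∧
    (∑ α ∈ m.support, max (-(m α)) 0) ≤ (n : ℤ)}

/-- Iterated `n`-extensions `E_n^k(Γ)`. -/
def EextIter {d : ℕ} (n : ℕ) : ℕ → Set (Fin d → ℤ) → Set (Fin d → ℤ)
  | 0, Γ => Eext n Γ
  | (k + 1), Γ => Eext n (EextIter n k Γ)

/-- The `n`-completion `E_n^∞(Γ)`. -/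
def EextInf {d : ℕ} (n : ℕ) (Γ : Set (Fin d → ℤ)) : Set (Fin d → ℤ) :=
  ⋃ k, EextIter n k Γ

/-!
Suppose first that `p < ∞` is not an even integer. Contractivity says that adding a character
`z ^ λ` with `λ ∈ ℕ₀^d \ Γ` to an `f` with spectrum in `Γ` never decreases the norm, so the first
variation `∫ |f| ^ (p - 2) * conj f * z ^ λ` vanishes. Take
`f = z ^ γ₀ * (1 + r * ∑ i, θ i * z ^ (γ i - γ₀))` with `γ₀, γ i ∈ Γ` and small `r`, where
`λ = γ₀ + ∑ i, n i • (γ i - γ₀)`. Averaging over the rotations `θ` makes the characters independent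
variables `w i`: what vanishes is the integral of the gradient of `|·| ^ p` at `1 + r * ∑ i, w i`
against the monomial `w ^ n`. By the binomial series its leading coefficient in `r` is
`choose (p / 2 - 1) a * choose (p / 2) b` times a positive integer, which is nonzero since `p` is
not even. Hence `Γ` contains every such `λ`, i.e. it is the restriction of a coset.

For `p = ∞`, the sum `f` of `z ^ γ₀` and the `z ^ γ i` attains its maximum modulus only where all
these characters agree. There `z ^ λ` agrees with them too, so `f - t * z ^ λ` has smaller norm than
`f` for small `t > 0`, by Kolmogorov's criterion.

For `p = 2 * (n + 1)`, the weight `|g| ^ (p - 2) * conj g = g ^ n * conj g ^ (n + 1)` is a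
polynomial, so the first variation only involves the finitely many combinations
`∑ i, (l i - k i) • γ i` with `∑ i, k i = n` and `∑ i, l i = n + 1`, and by convexity `Γ` is
contractive as soon as it contains those of them that lie in `ℕ₀^d`. This holds for a suitable
simplex in `ℕ₀^d` that is not the restriction of a coset because larger coefficients do lead to
further points of `ℕ₀^d`.
-/

section Characters

open UnitAddTorus
open scoped ComplexConjugate

variable {ι κ : Type*} [Fintype ι]

instance : IsProbabilityMeasure (volume : Measure UnitAddCircle) :=
  ⟨by simp [AddCircle.measure_univ]⟩

lemma torusChar_eq_mFourier {d : ℕ} (α : Fin d → ℤ) : torusChar α = mFourier α := rfl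

lemma norm_mFourier_apply (n : ι → ℤ) (x : UnitAddTorus ι) : ‖mFourier n x‖ = 1 := by
  simp only [mFourier, ContinuousMap.coe_mk, norm_prod, fourier_apply, Circle.norm_coe,
    Finset.prod_const_one]

lemma mFourier_ne_zero (n : ι → ℤ) (x : UnitAddTorus ι) : mFourier n x ≠ 0 :=
  norm_ne_zero_iff.mp <| by simp [norm_mFourier_apply]

lemma conj_mFourier_mul_self (n : ι → ℤ) (x : UnitAddTorus ι) :
    conj (mFourier n x) * mFourier n x = 1 := by
  rw [Complex.conj_mul', norm_mFourier_apply, Complex.ofReal_one, one_pow]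

lemma mFourier_apply_zero (n : ι → ℤ) : mFourier n 0 = 1 := by
  simp [mFourier]

lemma mFourier_apply_add (n : ι → ℤ) (x y : UnitAddTorus ι) :
    mFourier n (x + y) = mFourier n x * mFourier n y := by
  simp [mFourier, fourier_apply, AddCircle.toCircle_add, Finset.prod_mul_distrib]

lemma mFourier_finset_sum (s : Finset κ) (γ : κ → ι → ℤ) (x : UnitAddTorus ι) :
    mFourier (∑ i ∈ s, γ i) x = ∏ i ∈ s, mFourier (γ i) x := by
  induction s using Finset.cons_induction with
  | empty => simp [mFourier_zero]
  | cons i s hi ih => rw [Finset.sum_cons, Finset.prod_cons, mFourier_add, ih]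

lemma mFourier_nsmul (m : ℕ) (n : ι → ℤ) (x : UnitAddTorus ι) :
    mFourier (m • n) x = mFourier n x ^ m := by
  simpa using mFourier_finset_sum (Finset.range m) (fun _ => n) x

lemma mFourier_zsmul (m : ℤ) (n : ι → ℤ) (x : UnitAddTorus ι) :
    mFourier (m • n) x = mFourier n x ^ m := by
  cases m with
  | ofNat m => rw [Int.ofNat_eq_natCast, natCast_zsmul, mFourier_nsmul, zpow_natCast]
  | negSucc m =>
    rw [negSucc_zsmul, mFourier_neg, mFourier_nsmul, zpow_negSucc,
      Complex.inv_eq_conj (by rw [norm_pow, norm_mFourier_apply, one_pow])]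

lemma exists_mFourier_eq_neg_one {n : ι → ℤ} (hn : n ≠ 0) :
    ∃ y : UnitAddTorus ι, mFourier n y = -1 := by
  obtain ⟨j, hj⟩ := Function.ne_iff.mp hn
  refine ⟨Pi.single j ((1 / 2 / (n j : ℝ) : ℝ) : UnitAddCircle), ?_⟩
  change ∏ i, fourier (n i) _ = (-1 : ℂ)
  rw [Finset.prod_eq_single j (fun i _ hi => by simp [Pi.single_eq_of_ne hi]) (by simp)]
  simpa using fourier_add_half_inv_index (T := 1) hj one_pos 0

lemma integral_mFourier (n : ι → ℤ) : ∫ x, mFourier n x = if n = 0 then 1 else 0 := by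
  split_ifs with hn
  · simp [hn, mFourier_zero]
  · obtain ⟨y, hy⟩ := exists_mFourier_eq_neg_one hn
    refine integral_eq_zero_of_add_right_eq_neg (g := y) fun x => ?_
    rw [mFourier_apply_add, hy, mul_neg_one]

lemma integrable_of_continuous {X E : Type*} [TopologicalSpace X] [CompactSpace X]
    [MeasurableSpace X] [OpensMeasurableSpace X] [NormedAddCommGroup E] {μ : Measure X}
    [IsFiniteMeasureOnCompacts μ] {f : X → E} (hf : Continuous f) : Integrable f μ :=
  hf.integrable_of_hasCompactSupport (.of_compactSpace f)

end Characters

section Moments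

open UnitAddTorus
open scoped ComplexConjugate

variable {ι κ : Type*} [Fintype ι]

lemma sum_mul_mFourier_pow [DecidableEq κ] (s : Finset κ) (c : κ → ℂ) (γ : κ → ι → ℤ) (a : ℕ)
    (x : UnitAddTorus ι) :
    (∑ i ∈ s, c i * mFourier (γ i) x) ^ a =
      ∑ k ∈ s.piAntidiag a, (Nat.multinomial s k * ∏ i ∈ s, c i ^ k i : ℂ) *
        mFourier (∑ i ∈ s, k i • γ i) x := by
  rw [Finset.sum_pow_eq_sum_piAntidiag]
  refine Finset.sum_congr rfl fun k _ => ?_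
  simp only [mul_pow, Finset.prod_mul_distrib, mFourier_finset_sum, mFourier_nsmul, mul_assoc]

lemma integral_sum_mFourier_pow_mul_conj_pow [DecidableEq κ] (s : Finset κ) (c : κ → ℂ)
    (γ : κ → ι → ℤ) (a b : ℕ) (n : ι → ℤ) :
    ∫ x, (∑ i ∈ s, c i * mFourier (γ i) x) ^ a *
        conj (∑ i ∈ s, c i * mFourier (γ i) x) ^ b * mFourier n x =
      ∑ k ∈ s.piAntidiag a, ∑ l ∈ s.piAntidiag b,
        if ∑ i ∈ s, ((k i : ℤ) - l i) • γ i + n = 0 then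
          (Nat.multinomial s k * ∏ i ∈ s, c i ^ k i : ℂ) *
            (Nat.multinomial s l * ∏ i ∈ s, conj (c i) ^ l i)
        else 0 := by
  have expand (x : UnitAddTorus ι) :
      (∑ i ∈ s, c i * mFourier (γ i) x) ^ a *
          conj (∑ i ∈ s, c i * mFourier (γ i) x) ^ b * mFourier n x =
        ∑ k ∈ s.piAntidiag a, ∑ l ∈ s.piAntidiag b,
          (Nat.multinomial s k * ∏ i ∈ s, c i ^ k i : ℂ) *
            (Nat.multinomial s l * ∏ i ∈ s, conj (c i) ^ l i) *
            mFourier (∑ i ∈ s, ((k i : ℤ) - l i) • γ i + n) x := by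
    have frequency (k l : κ → ℕ) : ∑ i ∈ s, ((k i : ℤ) - l i) • γ i + n =
        ∑ i ∈ s, k i • γ i + -(∑ i ∈ s, l i • γ i) + n := by
      simp only [sub_smul, natCast_zsmul, Finset.sum_sub_distrib]
      rw [sub_eq_add_neg]
    rw [← map_pow, sum_mul_mFourier_pow, sum_mul_mFourier_pow, map_sum, Finset.sum_mul_sum,
      Finset.sum_mul]
    refine Finset.sum_congr rfl fun k _ => ?_
    rw [Finset.sum_mul]
    refine Finset.sum_congr rfl fun l _ => ?_
    rw [frequency, mFourier_add, mFourier_add, mFourier_neg]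
    simp only [map_mul, map_natCast, map_prod, map_pow]
    ring
  simp_rw [expand]
  rw [integral_finsetSum _ fun k _ => integrable_of_continuous (by fun_prop)]
  refine Finset.sum_congr rfl fun k _ => ?_
  rw [integral_finsetSum _ fun l _ => integrable_of_continuous (by fun_prop)]
  refine Finset.sum_congr rfl fun l _ => ?_
  rw [integral_const_mul, integral_mFourier, mul_ite, mul_one, mul_zero]

/-- The sum of the coordinates of a point of the torus, viewed as a subset of `ℂ^ι`. Contractivity
is tested on rotated pullbacks of `1 + r * coordSum` along homomorphisms of tori. -/
def coordSum (x : UnitAddTorus ι) : ℂ := ∑ i, mFourier (Pi.single i 1) x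

lemma continuous_coordSum : Continuous (coordSum (ι := ι)) := by
  unfold coordSum
  fun_prop

lemma norm_coordSum_le (x : UnitAddTorus ι) : ‖coordSum x‖ ≤ Fintype.card ι :=
  (norm_sum_le _ _).trans <| by simp [norm_mFourier_apply]

lemma integral_coordSum_pow_mul_conj_pow (a b : ℕ) (n : ι → ℤ) :
    ∫ x, coordSum x ^ a * conj (coordSum x) ^ b * mFourier n x =
      ∑ k ∈ Finset.univ.piAntidiag a, ∑ l ∈ Finset.univ.piAntidiag b,
        if ∀ i, (l i : ℤ) = k i + n i then
          (Nat.multinomial Finset.univ k * Nat.multinomial Finset.univ l : ℂ)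
        else 0 := by
  have frequency (k l : ι → ℕ) :
      ∑ i, ((k i : ℤ) - l i) • (Pi.single i 1 : ι → ℤ) + n = 0 ↔ ∀ i, (l i : ℤ) = k i + n i := by
    rw [funext_iff]
    refine forall_congr' fun j => ?_
    simp only [Pi.add_apply, Finset.sum_apply, Pi.smul_apply, Pi.single_apply, smul_eq_mul,
      mul_ite, mul_one, mul_zero, Finset.sum_ite_eq, Finset.mem_univ, if_true, Pi.zero_apply]
    omega
  have moments := integral_sum_mFourier_pow_mul_conj_pow Finset.univ (1 : ι → ℂ)
    (fun i => Pi.single i (1 : ℤ)) a b n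
  simp only [frequency] at moments
  simpa [coordSum] using moments

/-- The degree in `z` of the Laurent monomial `z ^ n`, not counting the inverses of variables; its
degree in those is `posDegree (-n)`. -/
def posDegree (n : ι → ℤ) : ℕ := ∑ i, (n i).toNat

lemma integral_coordSum_pow_mul_conj_pow_eq_zero {a b : ℕ} {n : ι → ℤ}
    (h : a < posDegree (-n) ∨ b < posDegree n) :
    ∫ x, coordSum x ^ a * conj (coordSum x) ^ b * mFourier n x = 0 := by
  rw [integral_coordSum_pow_mul_conj_pow]
  refine Finset.sum_eq_zero fun k hk => Finset.sum_eq_zero fun l hl => if_neg fun hkl => ?_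
  have hk_ge : posDegree (-n) ≤ ∑ i, k i :=
    Finset.sum_le_sum fun i _ => by have := hkl i; simp only [Pi.neg_apply]; omega
  have hl_ge : posDegree n ≤ ∑ i, l i :=
    Finset.sum_le_sum fun i _ => by have := hkl i; omega
  have hk_sum : ∑ i, k i = a := (Finset.mem_piAntidiag.mp hk).1
  have hl_sum : ∑ i, l i = b := (Finset.mem_piAntidiag.mp hl).1
  omega

lemma integral_coordSum_pow_mul_conj_pow_ne_zero (n : ι → ℤ) :
    ∫ x, coordSum x ^ posDegree (-n) * conj (coordSum x) ^ posDegree n * mFourier n x ≠ 0 := by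
  rw [integral_coordSum_pow_mul_conj_pow]
  set term : (ι → ℕ) → (ι → ℕ) → ℕ := fun k l =>
    if ∀ i, (l i : ℤ) = k i + n i then
      Nat.multinomial Finset.univ k * Nat.multinomial Finset.univ l
    else 0
  have cast_term (k l : ι → ℕ) : (if ∀ i, (l i : ℤ) = k i + n i then
      (Nat.multinomial Finset.univ k * Nat.multinomial Finset.univ l : ℂ) else 0) = term k l := by
    simp only [term]; split_ifs <;> simp
  have term_pos : 0 < term (fun i => (-(n i)).toNat) fun i => (n i).toNat := by
    simp only [term]
    rw [if_pos fun i => by omega]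
    exact Nat.mul_pos (Nat.multinomial_pos _ _) (Nat.multinomial_pos _ _)
  simp only [cast_term]
  have sum_pos : 0 < ∑ k ∈ Finset.univ.piAntidiag (posDegree (-n)),
      ∑ l ∈ Finset.univ.piAntidiag (posDegree n), term k l :=
    Finset.sum_pos' (fun _ _ => Nat.zero_le _) ⟨_, Finset.mem_piAntidiag.mpr ⟨rfl, by simp⟩,
      Finset.sum_pos' (fun _ _ => Nat.zero_le _)
        ⟨_, Finset.mem_piAntidiag.mpr ⟨rfl, by simp⟩, term_pos⟩⟩
  exact_mod_cast sum_pos.ne'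

end Moments

section RpowGradient

open Asymptotics Filter Topology UnitAddTorus
open scoped ComplexConjugate

/-- The gradient of the function `w ↦ ‖w‖ ^ q` away from the origin, up to the factor `q`: the
derivative of `‖w‖ ^ q` in the direction `v` is `q * Re (rpowGradient q w * v)`. -/
def rpowGradient (q : ℝ) (w : ℂ) : ℂ := (‖w‖ ^ (q - 2) : ℝ) * conj w

lemma continuous_rpowGradient_comp (q : ℝ) {X : Type*} [TopologicalSpace X] {f : X → ℂ}
    (hf : Continuous f) (hf0 : ∀ x, f x ≠ 0) : Continuous fun x => rpowGradient q (f x) := by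
  have : Continuous fun x => ‖f x‖ ^ (q - 2) :=
    hf.norm.rpow_const fun x => .inl (norm_ne_zero_iff.mpr (hf0 x))
  unfold rpowGradient
  fun_prop

lemma rpowGradient_mul_of_norm_eq_one (q : ℝ) {u : ℂ} (hu : ‖u‖ = 1) (w : ℂ) :
    rpowGradient q (u * w) = conj u * rpowGradient q w := by
  simp only [rpowGradient, norm_mul, hu, one_mul, map_mul]
  ring

lemma rpowGradient_one_add (q : ℝ) {z : ℂ} (hz : ‖z‖ < 1) :
    rpowGradient q (1 + z) =
      (1 + z) ^ ((q / 2 - 1 : ℝ) : ℂ) * (1 + conj z) ^ ((q / 2 : ℝ) : ℂ) := by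
  have hslit : 1 + z ∈ Complex.slitPlane := Complex.mem_slitPlane_of_norm_lt_one hz
  have hz0 : 1 + z ≠ 0 := Complex.slitPlane_ne_zero hslit
  have hconj0 : conj (1 + z) ≠ 0 := (map_ne_zero _).mpr hz0
  have harg : (1 + z).arg ≠ Real.pi := (Complex.mem_slitPlane_iff_arg.mp hslit).1
  have hnorm : ((‖1 + z‖ ^ (q - 2) : ℝ) : ℂ) =
      (1 + z) ^ ((q / 2 - 1 : ℝ) : ℂ) * conj (1 + z) ^ ((q / 2 - 1 : ℝ) : ℂ) := by
    rw [Complex.cpow_def_of_ne_zero hz0, Complex.cpow_def_of_ne_zero hconj0, ← Complex.exp_add,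
      Complex.log_conj _ harg, ← add_mul, Complex.add_conj, Complex.log_re,
      Real.rpow_def_of_pos (norm_pos_iff.mpr hz0)]
    push_cast
    ring_nf
  have hexp : ((q / 2 : ℝ) : ℂ) = ((q / 2 - 1 : ℝ) : ℂ) + 1 := by push_cast; ring
  rw [← map_one conj, ← map_add, hexp, Complex.cpow_add _ _ hconj0, Complex.cpow_one, ← mul_assoc,
    map_one, ← hnorm, rpowGradient]

lemma ring_choose_ne_zero {R : Type*} [CommRing R] [IsDomain R] [BinomialRing R] {a : R}
    (ha : ∀ m : ℕ, a ≠ m) (n : ℕ) : Ring.choose a n ≠ 0 := by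
  have descPochhammer_ne_zero : (descPochhammer ℤ n).smeval a ≠ 0 := by
    induction n with
    | zero => simp
    | succ n ih =>
      rw [descPochhammer_succ_right, Polynomial.smeval_mul]
      refine mul_ne_zero ih ?_
      simpa [Polynomial.smeval_sub, Polynomial.smeval_natCast] using sub_ne_zero.mpr (ha n)
  intro h
  rw [Ring.descPochhammer_eq_factorial_smul_choose, h, smul_zero] at descPochhammer_ne_zero
  exact descPochhammer_ne_zero rfl

lemma one_add_cpow_sub_sum_isBigO (a : ℂ) (M : ℕ) :
    (fun z : ℂ => (1 + z) ^ a - ∑ i ∈ Finset.range M, Ring.choose a i * z ^ i)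
      =O[𝓝 0] fun z => ‖z‖ ^ M := by
  refine ((Complex.one_add_cpow_hasFPowerSeriesAt_zero (a := a)).isBigO_sub_partialSum_pow
    M).congr_left fun z => ?_
  simp only [zero_add, FormalMultilinearSeries.partialSum, binomialSeries_apply]
  simp

/-- The Taylor polynomial of `z ↦ rpowGradient q (1 + z)`, in the variables `z` and `conj z`, of
degree less than `M` in each. -/
def rpowGradientTaylor (q : ℝ) (M : ℕ) (z : ℂ) : ℂ :=
  (∑ i ∈ Finset.range M, Ring.choose ((q / 2 - 1 : ℝ) : ℂ) i * z ^ i) *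
    ∑ j ∈ Finset.range M, Ring.choose ((q / 2 : ℝ) : ℂ) j * conj z ^ j

lemma continuous_rpowGradientTaylor (q : ℝ) (M : ℕ) : Continuous (rpowGradientTaylor q M) := by
  unfold rpowGradientTaylor
  fun_prop

lemma rpowGradient_sub_taylor_isBigO (q : ℝ) (M : ℕ) :
    (fun z : ℂ => rpowGradient q (1 + z) - rpowGradientTaylor q M z)
      =O[𝓝 0] fun z => ‖z‖ ^ M := by
  have tendsto_conj : Tendsto conj (𝓝 (0 : ℂ)) (𝓝 0) :=
    Complex.continuous_conj.tendsto' 0 0 (map_zero _)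
  have cpow_conj_sub : (fun z : ℂ => (1 + conj z) ^ ((q / 2 : ℝ) : ℂ) -
      ∑ j ∈ Finset.range M, Ring.choose ((q / 2 : ℝ) : ℂ) j * conj z ^ j)
      =O[𝓝 0] fun z => ‖z‖ ^ M := by
    simpa [Function.comp_def] using
      (one_add_cpow_sub_sum_isBigO ((q / 2 : ℝ) : ℂ) M).comp_tendsto tendsto_conj
  have cpow_conj_bounded : (fun z : ℂ => (1 + conj z) ^ ((q / 2 : ℝ) : ℂ))
      =O[𝓝 0] fun _ => (1 : ℝ) :=
    (Complex.one_add_cpow_hasFPowerSeriesAt_zero.continuousAt.tendsto.comp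
      tendsto_conj).isBigO_one ℝ
  have sum_bounded : (fun z : ℂ => ∑ i ∈ Finset.range M,
      Ring.choose ((q / 2 - 1 : ℝ) : ℂ) i * z ^ i) =O[𝓝 0] fun _ => (1 : ℝ) :=
    Tendsto.isBigO_one ℝ <| (by fun_prop : Continuous _).tendsto 0
  have product_sub :=
    ((one_add_cpow_sub_sum_isBigO ((q / 2 - 1 : ℝ) : ℂ) M).mul cpow_conj_bounded).add
      (by simpa only [one_mul, mul_one] using sum_bounded.mul cpow_conj_sub)
  simp only [mul_one] at product_sub
  refine product_sub.congr' ?_ EventuallyEq.rfl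
  filter_upwards [Metric.ball_mem_nhds (0 : ℂ) one_pos] with z hz
  rw [rpowGradient_one_add q (by simpa using hz), rpowGradientTaylor]
  ring

lemma integral_comp_smul_mul_isBigO {X : Type*} [MeasurableSpace X] {μ : Measure X}
    [IsFiniteMeasure μ] {R : ℂ → ℂ} {k : ℕ} (hR : R =O[𝓝 0] fun z => ‖z‖ ^ k) {s χ : X → ℂ}
    {S : ℝ} (hs : ∀ x, ‖s x‖ ≤ S) (hχ : ∀ x, ‖χ x‖ ≤ 1) :
    (fun r : ℝ => ∫ x, R (r * s x) * χ x ∂μ) =O[𝓝 0] fun r => r ^ k := by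
  obtain ⟨C, hC⟩ := hR.bound
  obtain ⟨δ, hδ, hbound⟩ := Metric.eventually_nhds_iff.mp hC
  have small : ∀ᶠ r : ℝ in 𝓝 0, |r| * S < δ :=
    (by fun_prop : Continuous fun r : ℝ => |r| * S).tendsto' 0 0 (by simp) |>.eventually_lt_const hδ
  refine IsBigO.of_bound (|C| * S ^ k * μ.real Set.univ) ?_
  filter_upwards [small] with r hr
  have arg_le (x : X) : ‖(r : ℂ) * s x‖ ≤ |r| * S := by
    rw [norm_mul, Complex.norm_real, Real.norm_eq_abs]
    exact mul_le_mul_of_nonneg_left (hs x) (abs_nonneg r)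
  have integrand_le (x : X) : ‖R (r * s x) * χ x‖ ≤ |C| * (|r| * S) ^ k := calc
    ‖R (r * s x) * χ x‖ ≤ ‖R (r * s x)‖ := by
      rw [norm_mul]; exact mul_le_of_le_one_right (norm_nonneg _) (hχ x)
    _ ≤ C * ‖(r : ℂ) * s x‖ ^ k := by
      simpa using hbound (y := r * s x) (by simpa using (arg_le x).trans_lt hr)
    _ ≤ |C| * (|r| * S) ^ k := by gcongr; exacts [le_abs_self C, arg_le x]
  refine (norm_integral_le_of_norm_le_const (ae_of_all _ integrand_le)).trans_eq ?_
  rw [mul_pow, norm_pow, Real.norm_eq_abs]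
  ring

variable {ι : Type*} [Fintype ι]

lemma integral_rpowGradientTaylor_mul_mFourier (q : ℝ) (M : ℕ) (n : ι → ℤ) (r : ℝ) :
    ∫ x, rpowGradientTaylor q M (r * coordSum x) * mFourier n x =
      ∑ ij ∈ Finset.range M ×ˢ Finset.range M,
        Ring.choose ((q / 2 - 1 : ℝ) : ℂ) ij.1 * Ring.choose ((q / 2 : ℝ) : ℂ) ij.2 *
          (∫ x, coordSum x ^ ij.1 * conj (coordSum x) ^ ij.2 * mFourier n x) *
          (r : ℂ) ^ (ij.1 + ij.2) := by
  have hcont := continuous_coordSum (ι := ι)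
  have expand (x : UnitAddTorus ι) : rpowGradientTaylor q M (r * coordSum x) * mFourier n x =
      ∑ ij ∈ Finset.range M ×ˢ Finset.range M,
        (Ring.choose ((q / 2 - 1 : ℝ) : ℂ) ij.1 * Ring.choose ((q / 2 : ℝ) : ℂ) ij.2 *
          (r : ℂ) ^ (ij.1 + ij.2)) *
          (coordSum x ^ ij.1 * conj (coordSum x) ^ ij.2 * mFourier n x) := by
    rw [rpowGradientTaylor, Finset.sum_mul_sum, ← Finset.sum_product', Finset.sum_mul]
    refine Finset.sum_congr rfl fun ij _ => ?_
    simp only [map_mul, Complex.conj_ofReal]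
    ring
  simp_rw [expand]
  rw [integral_finsetSum _ fun ij _ => integrable_of_continuous (by fun_prop)]
  refine Finset.sum_congr rfl fun ij _ => ?_
  rw [integral_const_mul]
  ring

/-- The coefficient of `r ^ (posDegree (-n) + posDegree n)`, the first one that can be nonzero, in
the Taylor expansion at `r = 0` of `∫ x, rpowGradient q (1 + r * coordSum x) * mFourier n x`. -/
def leadingMoment (q : ℝ) (n : ι → ℤ) : ℂ :=
  Ring.choose ((q / 2 - 1 : ℝ) : ℂ) (posDegree (-n)) *
    Ring.choose ((q / 2 : ℝ) : ℂ) (posDegree n) *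
    ∫ x, coordSum x ^ posDegree (-n) * conj (coordSum x) ^ posDegree n * mFourier n x

lemma leadingMoment_ne_zero {q : ℝ} (hq : ∀ m : ℕ, q ≠ 2 * m) (n : ι → ℤ) :
    leadingMoment q n ≠ 0 := by
  refine mul_ne_zero (mul_ne_zero (ring_choose_ne_zero (fun m hm => hq (m + 1) ?_) _)
    (ring_choose_ne_zero (fun m hm => hq m ?_) _)) (integral_coordSum_pow_mul_conj_pow_ne_zero n)
  · have : q / 2 - 1 = m := by exact_mod_cast hm
    push_cast; linarith
  · have : q / 2 = m := by exact_mod_cast hm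
    linarith

lemma integral_rpowGradientTaylor_sub_isBigO (q : ℝ) (n : ι → ℤ) {M : ℕ}
    (hM : posDegree (-n) + posDegree n = M) :
    (fun r : ℝ => (∫ x, rpowGradientTaylor q (M + 1) (r * coordSum x) * mFourier n x) -
      leadingMoment q n * (r : ℂ) ^ M) =O[𝓝 0] fun r : ℝ => r ^ (M + 1) := by
  have leading_mem : (posDegree (-n), posDegree n) ∈
      Finset.range (M + 1) ×ˢ Finset.range (M + 1) := by
    simp only [Finset.mem_product, Finset.mem_range]
    omega
  simp only [integral_rpowGradientTaylor_mul_mFourier, leadingMoment, ← hM] at leading_mem ⊢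
  simp only [← Finset.sum_erase_eq_sub leading_mem]
  refine IsBigO.fun_sum fun ⟨i, j⟩ hij => ?_
  by_cases vanishing : i < posDegree (-n) ∨ j < posDegree n
  · simpa [integral_coordSum_pow_mul_conj_pow_eq_zero vanishing] using isBigO_zero _ _
  · have degree_ge : posDegree (-n) + posDegree n + 1 ≤ i + j := by
      have : ¬(i = posDegree (-n) ∧ j = posDegree n) := fun h =>
        Finset.ne_of_mem_erase hij (Prod.ext h.1 h.2)
      omega
    refine IsBigO.const_mul_left (isBigO_iff.mpr ⟨1, ?_⟩) _
    filter_upwards [Metric.closedBall_mem_nhds (0 : ℝ) one_pos] with r hr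
    rw [norm_pow, Complex.norm_real, norm_pow, one_mul]
    exact pow_le_pow_of_le_one (norm_nonneg r) (by simpa using hr) degree_ge

lemma one_add_mul_coordSum_ne_zero {r : ℝ} (hr : |r| * Fintype.card ι < 1) (x : UnitAddTorus ι) :
    1 + r * coordSum x ≠ 0 := by
  intro hx
  have norm_lt : ‖(r : ℂ) * coordSum x‖ < 1 := by
    rw [norm_mul, Complex.norm_real, Real.norm_eq_abs]
    exact (mul_le_mul_of_nonneg_left (norm_coordSum_le x) (abs_nonneg r)).trans_lt hr
  rw [← neg_eq_of_add_eq_zero_right hx, norm_neg, norm_one] at norm_lt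
  exact lt_irrefl _ norm_lt

lemma continuous_rpowGradient_one_add_coordSum (q : ℝ) {r : ℝ} (hr : |r| * Fintype.card ι < 1) :
    Continuous fun x : UnitAddTorus ι => rpowGradient q (1 + r * coordSum x) := by
  have hcont := continuous_coordSum (ι := ι)
  exact continuous_rpowGradient_comp q (by fun_prop) (one_add_mul_coordSum_ne_zero hr)

lemma eventually_abs_mul_card_lt_one : ∀ᶠ r : ℝ in 𝓝 0, |r| * Fintype.card ι < 1 :=
  (by fun_prop : Continuous fun r : ℝ => |r| * Fintype.card ι).tendsto' 0 0 (by simp)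
    |>.eventually_lt_const one_pos

lemma integral_rpowGradient_sub_isBigO (q : ℝ) (n : ι → ℤ) {M : ℕ}
    (hM : posDegree (-n) + posDegree n = M) :
    (fun r : ℝ => (∫ x, rpowGradient q (1 + r * coordSum x) * mFourier n x) -
      leadingMoment q n * (r : ℂ) ^ M) =O[𝓝 0] fun r : ℝ => r ^ (M + 1) := by
  have remainder := integral_comp_smul_mul_isBigO (μ := volume)
    (rpowGradient_sub_taylor_isBigO q (M + 1)) (norm_coordSum_le (ι := ι))
    fun x => (norm_mFourier_apply n x).le
  refine (remainder.add (integral_rpowGradientTaylor_sub_isBigO q n hM)).congr' ?_ EventuallyEq.rfl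
  filter_upwards [eventually_abs_mul_card_lt_one (ι := ι)] with r hr
  have hcont := continuous_coordSum (ι := ι)
  have hgradient := continuous_rpowGradient_one_add_coordSum q hr
  have htaylor := continuous_rpowGradientTaylor q (M + 1)
  simp only [sub_mul]
  rw [integral_sub (integrable_of_continuous (by fun_prop))
    (integrable_of_continuous (by fun_prop))]
  ring

lemma eventually_integral_rpowGradient_ne_zero {q : ℝ} (hq : ∀ m : ℕ, q ≠ 2 * m) (n : ι → ℤ) :
    ∀ᶠ r : ℝ in 𝓝[≠] 0, ∫ x, rpowGradient q (1 + r * coordSum x) * mFourier n x ≠ 0 := by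
  have remainder := (integral_rpowGradient_sub_isBigO q n rfl).trans_isLittleO
    (isLittleO_pow_pow (Nat.lt_succ_self (posDegree (-n) + posDegree n)))
  have leading_pos : 0 < ‖leadingMoment q n‖ := norm_pos_iff.mpr (leadingMoment_ne_zero hq n)
  filter_upwards [(remainder.bound (half_pos leading_pos)).filter_mono nhdsWithin_le_nhds,
    self_mem_nhdsWithin] with r hr hr0 hzero
  have pow_pos : 0 < ‖r‖ ^ (posDegree (-n) + posDegree n) := pow_pos (norm_pos_iff.mpr hr0) _
  rw [hzero, zero_sub, norm_neg, norm_mul, norm_pow, Complex.norm_real, norm_pow] at hr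
  nlinarith

end RpowGradient

section FirstVariation

open Filter Topology
open scoped ComplexConjugate

lemma hasDerivAt_norm_add_mul_rpow (q : ℝ) {w v : ℂ} {t : ℝ} (h : w + t * v ≠ 0) :
    HasDerivAt (fun s : ℝ => ‖w + s * v‖ ^ q) (q * (rpowGradient q (w + t * v) * v).re) t := by
  have rpow_eq (y : ℂ) (e : ℝ) : (‖y‖ ^ 2) ^ e = ‖y‖ ^ (2 * e) := by
    rw [← Real.rpow_natCast, ← Real.rpow_mul (norm_nonneg y), Nat.cast_ofNat]
  have line : HasDerivAt (fun s : ℝ => w + s * v) v t := by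
    simpa using ((hasDerivAt_id' t).ofReal_comp.mul_const v).const_add w
  have deriv_rpow := line.norm_sq.rpow_const (p := q / 2) (.inl (by simpa using h))
  simp only [rpow_eq, mul_div_cancel₀ q two_ne_zero] at deriv_rpow
  refine deriv_rpow.congr_deriv ?_
  rw [Complex.inner, rpowGradient, mul_assoc (_ : ℂ), Complex.re_ofReal_mul,
    mul_comm (conj (w + t * v)), show 2 * (q / 2 - 1) = q - 2 by ring]
  ring

variable {X : Type*} [TopologicalSpace X] [CompactSpace X]

lemma eventually_forall_add_mul_ne_zero {f g : X → ℂ} (hf : Continuous f) (hg : Continuous g)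
    (hf0 : ∀ x, f x ≠ 0) : ∀ᶠ t : ℝ in 𝓝 0, ∀ x, f x + t * g x ≠ 0 := by
  have := isCompact_univ.eventually_forall_of_forall_eventually (x₀ := (0 : ℝ))
    (P := fun t x => f x + t * g x ≠ 0) fun x _ =>
      (by fun_prop : Continuous fun z : ℝ × X => f z.2 + z.1 * g z.2).continuousAt.eventually_ne
        (by simpa using hf0 x)
  simpa using this

variable [MeasurableSpace X] [OpensMeasurableSpace X] {μ : Measure X} [IsFiniteMeasure μ]

lemma hasDerivAt_integral_norm_add_mul_rpow (q : ℝ) {f g : X → ℂ} (hf : Continuous f)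
    (hg : Continuous g) (hf0 : ∀ x, f x ≠ 0) :
    HasDerivAt (fun t : ℝ => ∫ x, ‖f x + t * g x‖ ^ q ∂μ)
      (q * ∫ x, (rpowGradient q (f x) * g x).re ∂μ) 0 := by
  obtain ⟨ε, hε, nonvanishing⟩ := Metric.nhds_basis_closedBall.eventually_iff.mp
    (eventually_forall_add_mul_ne_zero hf hg hf0)
  have zero_mem : (0 : ℝ) ∈ Metric.closedBall 0 ε := Metric.mem_closedBall_self hε.le
  have continuous_rpow {t : ℝ} (ht : t ∈ Metric.closedBall 0 ε) :
      Continuous fun x => ‖f x + t * g x‖ ^ q :=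
    (by fun_prop : Continuous fun x => ‖f x + t * g x‖).rpow_const
      fun x => .inl (norm_ne_zero_iff.mpr (nonvanishing ht x))
  have continuousOn_deriv : ContinuousOn
      (fun z : ℝ × X => q * (rpowGradient q (f z.2 + z.1 * g z.2) * g z.2).re)
      (Metric.closedBall 0 ε ×ˢ Set.univ) := by
    have : ContinuousOn (fun z : ℝ × X => ‖f z.2 + z.1 * g z.2‖ ^ (q - 2))
        (Metric.closedBall 0 ε ×ˢ Set.univ) :=
      (by fun_prop : Continuous fun z : ℝ × X => ‖f z.2 + z.1 * g z.2‖).continuousOn.rpow_const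
        fun z hz => .inl (norm_ne_zero_iff.mpr (nonvanishing hz.1 z.2))
    unfold rpowGradient
    fun_prop
  obtain ⟨K, hK⟩ := ((isCompact_closedBall (0 : ℝ) ε).prod
    isCompact_univ).exists_bound_of_continuousOn continuousOn_deriv
  have continuous_deriv : Continuous fun x =>
      q * (rpowGradient q (f x + (0 : ℝ) * g x) * g x).re :=
    continuousOn_deriv.comp_continuous (f := fun x => ((0 : ℝ), x)) (by fun_prop)
      fun x => ⟨zero_mem, Set.mem_univ x⟩
  have deriv := hasDerivAt_integral_of_dominated_loc_of_deriv_le (μ := μ)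
    (F := fun (t : ℝ) x => ‖f x + t * g x‖ ^ q)
    (F' := fun t x => q * (rpowGradient q (f x + t * g x) * g x).re) (bound := fun _ => K)
    (Metric.closedBall_mem_nhds 0 hε)
    (eventually_of_mem (Metric.closedBall_mem_nhds 0 hε) fun t ht =>
      (continuous_rpow ht).aestronglyMeasurable)
    (integrable_of_continuous (continuous_rpow zero_mem))
    continuous_deriv.aestronglyMeasurable
    (ae_of_all _ fun x t ht => hK (t, x) ⟨ht, Set.mem_univ x⟩) (integrable_const K)
    (ae_of_all _ fun x t ht => hasDerivAt_norm_add_mul_rpow q (nonvanishing ht x))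
  refine deriv.2.congr_deriv ?_
  rw [← integral_const_mul]
  simp

lemma integral_rpowGradient_mul_eq_zero {q : ℝ} (hq : q ≠ 0) {f g : X → ℂ} (hf : Continuous f)
    (hg : Continuous g) (hf0 : ∀ x, f x ≠ 0)
    (hmin : ∀ t : ℂ, ∫ x, ‖f x‖ ^ q ∂μ ≤ ∫ x, ‖f x + t * g x‖ ^ q ∂μ) :
    ∫ x, rpowGradient q (f x) * g x ∂μ = 0 := by
  have hgradient := continuous_rpowGradient_comp q hf hf0
  have re_eq_zero (c : ℂ) : (c * ∫ x, rpowGradient q (f x) * g x ∂μ).re = 0 := by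
    have localMin : IsLocalMin (fun t : ℝ => ∫ x, ‖f x + t * (c * g x)‖ ^ q ∂μ) 0 :=
      Eventually.of_forall fun t => by simpa [mul_assoc] using hmin (t * c)
    have deriv_zero := localMin.hasDerivAt_eq_zero
      (hasDerivAt_integral_norm_add_mul_rpow q hf (by fun_prop) hf0)
    rw [← (mul_eq_zero.mp deriv_zero).resolve_left hq, ← integral_const_mul]
    have integrable : Integrable (fun x => c * (rpowGradient q (f x) * g x)) μ :=
      integrable_of_continuous (by fun_prop)
    simpa only [mul_left_comm, RCLike.re_eq_complex_re] using (integral_re integrable).symm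
  have := re_eq_zero (conj (∫ x, rpowGradient q (f x) * g x ∂μ))
  rwa [← Complex.normSq_eq_conj_mul_self, Complex.ofReal_re, Complex.normSq_eq_zero] at this

lemma eLpNorm_le_eLpNorm_iff_integral_rpow {p : ℝ≥0∞} (hp0 : p ≠ 0) (hpt : p ≠ ∞) {f g : X → ℂ}
    (hf : Continuous f) (hg : Continuous g) :
    eLpNorm f p μ ≤ eLpNorm g p μ ↔ ∫ x, ‖f x‖ ^ p.toReal ∂μ ≤ ∫ x, ‖g x‖ ^ p.toReal ∂μ := by
  have memLp {h : X → ℂ} (hh : Continuous h) : MemLp h p μ := by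
    obtain ⟨C, hC⟩ := isCompact_univ.exists_bound_of_continuousOn hh.continuousOn
    exact .of_bound hh.aestronglyMeasurable C (ae_of_all _ fun x => hC x (Set.mem_univ x))
  have integral_nonneg (h : X → ℂ) : 0 ≤ ∫ x, ‖h x‖ ^ p.toReal ∂μ :=
    MeasureTheory.integral_nonneg fun x => by positivity
  have hp : 0 < p.toReal := ENNReal.toReal_pos hp0 hpt
  rw [(memLp hf).eLpNorm_eq_integral_rpow_norm hp0 hpt,
    (memLp hg).eLpNorm_eq_integral_rpow_norm hp0 hpt,
    ENNReal.ofReal_le_ofReal_iff (Real.rpow_nonneg (integral_nonneg g) _),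
    Real.rpow_le_rpow_iff (integral_nonneg f) (integral_nonneg g) (inv_pos.mpr hp)]

end FirstVariation

section UniformApproximation

open Filter Topology
open scoped ComplexConjugate

variable {X : Type*} [TopologicalSpace X] [CompactSpace X]

lemma exists_norm_apply_eq_norm [Nonempty X] (f : C(X, ℂ)) : ∃ x, ‖f x‖ = ‖f‖ := by
  obtain ⟨x, -, hx⟩ := isCompact_univ.exists_isMaxOn Set.univ_nonempty
    (map_continuous f).norm.continuousOn
  exact ⟨x, le_antisymm (f.norm_coe_le_norm x)
    ((f.norm_le (norm_nonneg _)).mpr fun y => hx (Set.mem_univ y))⟩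

lemma eLpNorm_top_continuousMap [Nonempty X] [MeasurableSpace X] {μ : Measure X}
    [μ.IsOpenPosMeasure] (f : C(X, ℂ)) : eLpNorm f ∞ μ = ‖f‖ₑ := by
  rw [eLpNorm_exponent_top]
  refine le_antisymm (eLpNormEssSup_le_of_ae_enorm_bound (ae_of_all _ fun x =>
    enorm_le_iff_norm_le.mpr (f.norm_coe_le_norm x))) ?_
  have apply_le (x : X) : ‖f x‖ₑ ≤ eLpNormEssSup f μ :=
    (isClosed_le (by fun_prop) continuous_const).closure_subset
      (Measure.dense_of_ae (ae_le_eLpNormEssSup (f := f) (μ := μ)) x)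
  obtain ⟨x, hx⟩ := exists_norm_apply_eq_norm f
  rw [← enorm_norm, ← hx, enorm_norm]
  exact apply_le x

lemma two_mul_re_conj_mul_add_nonneg {w v : ℂ} {t : ℝ} (ht : 0 < t) (h : ‖w‖ ≤ ‖w + t * v‖) :
    0 ≤ 2 * (conj w * v).re + t * ‖v‖ ^ 2 := by
  have norm_sq_add : ‖w + t * v‖ ^ 2 =
      ‖w‖ ^ 2 + t * (2 * (conj w * v).re + t * ‖v‖ ^ 2) := by
    simp only [← Complex.normSq_eq_norm_sq, Complex.normSq_apply, Complex.add_re, Complex.add_im,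
      Complex.mul_re, Complex.mul_im, Complex.ofReal_re, Complex.ofReal_im, Complex.conj_re,
      Complex.conj_im]
    ring
  have norm_sq_le := pow_le_pow_left₀ (norm_nonneg _) h 2
  exact nonneg_of_mul_nonneg_right (by linarith) ht

/-- Half of Kolmogorov's criterion for best uniform approximation. -/
lemma exists_norm_eq_norm_and_re_conj_mul_nonneg [Nonempty X] {f g : C(X, ℂ)}
    (h : ∀ t : ℝ, 0 < t → ‖f‖ ≤ ‖f + (t : ℂ) • g‖) :
    ∃ x, ‖f x‖ = ‖f‖ ∧ 0 ≤ (conj (f x) * g x).re := by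
  choose x hx using fun t : ℝ => exists_norm_apply_eq_norm (f + (t : ℂ) • g)
  have norm_le {t : ℝ} (ht : 0 < t) : ‖f‖ ≤ ‖f (x t) + t * g (x t)‖ :=
    (h t ht).trans_eq (by simpa using (hx t).symm)
  have norm_le_norm_add {t : ℝ} (ht : 0 < t) : ‖f‖ ≤ ‖f (x t)‖ + t * ‖g‖ := by
    refine (norm_le ht).trans ((norm_add_le _ _).trans ?_)
    rw [norm_mul, Complex.norm_real, Real.norm_of_nonneg ht.le]
    gcongr
    exact g.norm_coe_le_norm _
  have re_add_nonneg {t : ℝ} (ht : 0 < t) :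
      0 ≤ 2 * (conj (f (x t)) * g (x t)).re + t * ‖g‖ ^ 2 := by
    have g_le := pow_le_pow_left₀ (norm_nonneg _) (g.norm_coe_le_norm (x t)) 2
    nlinarith [two_mul_re_conj_mul_add_nonneg ht ((f.norm_coe_le_norm _).trans (norm_le ht))]
  let U : Ultrafilter ℝ := Ultrafilter.of (𝓝[>] 0)
  have eventually_pos : ∀ᶠ t : ℝ in U, 0 < t := Ultrafilter.of_le _ self_mem_nhdsWithin
  have tendsto_id : Tendsto (fun t : ℝ => t) U (𝓝 0) :=
    (Ultrafilter.of_le (𝓝[>] (0 : ℝ))).trans nhdsWithin_le_nhds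
  obtain ⟨y, -, hy⟩ := isCompact_univ.ultrafilter_le_nhds (U.map x) (by simp)
  have tendsto_f : Tendsto (fun t => f (x t)) U (𝓝 (f y)) := ((map_continuous f).tendsto y).comp hy
  have tendsto_g : Tendsto (fun t => g (x t)) U (𝓝 (g y)) := ((map_continuous g).tendsto y).comp hy
  refine ⟨y, le_antisymm (f.norm_coe_le_norm y) ?_, ?_⟩
  · refine ge_of_tendsto ?_ (eventually_pos.mono fun t => norm_le_norm_add)
    simpa using tendsto_f.norm.add (tendsto_id.mul_const ‖g‖)
  · have limit_nonneg : 0 ≤ 2 * (conj (f y) * g y).re + 0 * ‖g‖ ^ 2 :=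
      ge_of_tendsto (((Complex.continuous_re.tendsto _).comp
        (((Complex.continuous_conj.tendsto _).comp tendsto_f).mul tendsto_g)).const_mul 2 |>.add
          (tendsto_id.mul_const _)) (eventually_pos.mono fun t => re_add_nonneg)
    linarith

lemma eq_of_norm_sum_eq_card {κ : Type*} [Fintype κ] {z : κ → ℂ} (hz : ∀ i, ‖z i‖ = 1)
    (hsum : ‖∑ i, z i‖ = Fintype.card κ) (i j : κ) : z i = z j := by
  set S := ∑ i, z i
  have re_le (k : κ) : (conj S * z k).re ≤ Fintype.card κ :=
    (Complex.re_le_norm _).trans_eq (by rw [norm_mul, RCLike.norm_conj, hz, hsum, mul_one])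
  have sum_re : ∑ k, (conj S * z k).re = ∑ _ : κ, (Fintype.card κ : ℝ) := by
    rw [← Complex.re_sum, ← Finset.mul_sum, ← Complex.normSq_eq_conj_mul_self, Complex.ofReal_re,
      Complex.normSq_eq_norm_sq, hsum]
    simp [sq]
  have card_mul_eq (k : κ) : Fintype.card κ * z k = S := by
    have re_eq := (Finset.sum_eq_sum_iff_of_le fun k _ => re_le k).mp sum_re k (Finset.mem_univ k)
    have normSq_sub_eq_zero : Complex.normSq (Fintype.card κ * z k - S) = 0 := by
      have re_mul_conj : (Fintype.card κ * z k * conj S).re = Fintype.card κ * Fintype.card κ := by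
        rw [mul_assoc, mul_comm (z k), ← Complex.ofReal_natCast, Complex.re_ofReal_mul, re_eq]
      rw [Complex.normSq_sub, re_mul_conj, Complex.normSq_eq_norm_sq, Complex.normSq_eq_norm_sq,
        hsum, norm_mul, hz, Complex.norm_natCast]
      ring
    exact sub_eq_zero.mp (Complex.normSq_eq_zero.mp normSq_sub_eq_zero)
  have card_ne_zero : (Fintype.card κ : ℂ) ≠ 0 :=
    Nat.cast_ne_zero.mpr (Fintype.card_pos_iff.mpr ⟨i⟩).ne'
  exact mul_left_cancel₀ card_ne_zero ((card_mul_eq i).trans (card_mul_eq j).symm)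

end UniformApproximation

section CosetRestriction

open UnitAddTorus Filter Topology
open scoped ComplexConjugate

variable {ι κ : Type*} [Fintype ι]

/-- The homomorphism `𝕋^ι → 𝕋^κ` whose coordinates are the characters `z ↦ z ^ v i`. -/
def torusHom (v : κ → ι → ℤ) (x : UnitAddTorus ι) : UnitAddTorus κ := fun i => ∑ j, v i j • x j

lemma continuous_torusHom (v : κ → ι → ℤ) : Continuous (torusHom v) := by
  unfold torusHom
  fun_prop

variable [Fintype κ]

lemma mFourier_torusHom (n : κ → ℤ) (v : κ → ι → ℤ) (x : UnitAddTorus ι) :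
    mFourier n (torusHom v x) = mFourier (∑ i, n i • v i) x := by
  have fourier_sum (m : ℤ) (s : Finset ι) (y : ι → UnitAddCircle) :
      fourier m (∑ j ∈ s, y j) = ∏ j ∈ s, fourier m (y j) := by
    induction s using Finset.cons_induction with
    | empty => simp
    | cons j s hj ih =>
      rw [Finset.sum_cons, Finset.prod_cons, ← ih]
      simp [fourier_apply, AddCircle.toCircle_add]
  rw [mFourier_finset_sum]
  refine Finset.prod_congr rfl fun i _ => ?_
  rw [torusHom, fourier_sum]
  exact Finset.prod_congr rfl fun j _ => by simp [fourier_apply, mul_smul]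

lemma coordSum_add_torusHom (θ : UnitAddTorus κ) (v : κ → ι → ℤ) (x : UnitAddTorus ι) :
    coordSum (θ + torusHom v x) = ∑ i, mFourier (Pi.single i 1) θ * mFourier (v i) x := by
  refine Finset.sum_congr rfl fun i _ => ?_
  rw [mFourier_apply_add, mFourier_torusHom, Finset.sum_eq_single i] <;> simp +contextual

lemma integral_eq_zero_of_forall_integral_add_eq_zero {X G E : Type*} [TopologicalSpace X]
    [CompactSpace X] [MeasurableSpace X] [OpensMeasurableSpace X] {μ : Measure X}
    [IsProbabilityMeasure μ] [TopologicalSpace G] [CompactSpace G] [AddGroup G] [ContinuousAdd G]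
    [MeasurableSpace G] [BorelSpace G] {ν : Measure G} [IsFiniteMeasure ν]
    [ν.IsAddRightInvariant] [SecondCountableTopologyEither X G] [NormedAddCommGroup E]
    [NormedSpace ℝ E] [CompleteSpace E] {ξ : X → G} (hξ : Continuous ξ) {Ψ : G → E}
    (hΨ : Continuous Ψ)
    (h : ∀ θ, ∫ x, Ψ (θ + ξ x) ∂μ = 0) : ∫ θ, Ψ θ ∂ν = 0 := by
  calc ∫ θ, Ψ θ ∂ν = ∫ x, ∫ θ, Ψ (θ + ξ x) ∂ν ∂μ := by simp [integral_add_right_eq_self]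
    _ = ∫ θ, ∫ x, Ψ (θ + ξ x) ∂μ ∂ν :=
      integral_integral_swap (integrable_of_continuous (by fun_prop))
    _ = 0 := by simp [h]

variable {d : ℕ} {p : ℝ≥0∞} {Γ : Set (Fin d → ℤ)}

lemma trigPoly_support_filter (a : (Fin d → ℤ) →₀ ℂ) (P : (Fin d → ℤ) → Prop) :
    trigPoly (a.support.filter P) a = Finsupp.linearCombination ℂ torusChar (a.filter P) := by
  ext x
  rw [Finsupp.linearCombination_apply, Finsupp.sum, Finsupp.support_filter, Finset.sum_apply]
  refine Finset.sum_congr rfl fun α hα => ?_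
  rw [Finsupp.filter_apply_pos _ _ (Finset.mem_filter.mp hα).2, Pi.smul_apply, smul_eq_mul]

lemma trigPoly_support (a : (Fin d → ℤ) →₀ ℂ) :
    trigPoly a.support a = Finsupp.linearCombination ℂ torusChar a := by
  ext x
  simp [trigPoly, Finsupp.linearCombination_apply, Finsupp.sum]

lemma IsContractiveHp.eLpNorm_linearCombination_filter_le (hcontr : IsContractiveHp d p Γ)
    {a : (Fin d → ℤ) →₀ ℂ} (ha : ↑a.support ⊆ NN d) :
    eLpNorm (Finsupp.linearCombination ℂ torusChar (a.filter (· ∈ Γ))) p volume ≤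
      eLpNorm (Finsupp.linearCombination ℂ torusChar a) p volume := by
  rw [← trigPoly_support_filter, ← trigPoly_support]
  exact hcontr _ ha a

lemma IsContractiveHp.eLpNorm_le_add_smul_torusChar (hcontr : IsContractiveHp d p Γ)
    (hΓ : Γ ⊆ NN d) {f : Torus d → ℂ} (hf : f ∈ Submodule.span ℂ (torusChar '' Γ))
    {lam : Fin d → ℤ} (hlam : lam ∈ NN d) (hlamΓ : lam ∉ Γ) (t : ℂ) :
    eLpNorm f p volume ≤ eLpNorm (f + t • torusChar lam) p volume := by
  obtain ⟨a, ha, rfl⟩ := (Finsupp.mem_span_image_iff_linearCombination ℂ).mp hf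
  have support_subset_NN : ↑(a + Finsupp.single lam t).support ⊆ NN d := by
    intro α hα
    rcases Finset.mem_union.mp (Finsupp.support_add hα) with hα | hα
    · exact hΓ (ha hα)
    · rwa [Finset.mem_singleton.mp (Finsupp.support_single_subset hα)]
  have filter_eq : (a + Finsupp.single lam t).filter (· ∈ Γ) = a := by
    rw [Finsupp.filter_add, Finsupp.filter_single_of_neg _ hlamΓ, add_zero,
      Finsupp.filter_eq_self_iff]
    exact fun α hα => ha (Finsupp.mem_support_iff.mpr hα)
  have contraction := hcontr.eLpNorm_linearCombination_filter_le support_subset_NN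
  rwa [filter_eq, map_add, Finsupp.linearCombination_single] at contraction

lemma mFourier_mul_one_add_coordSum_mem_span {γ₀ : Fin d → ℤ} (hγ₀ : γ₀ ∈ Γ)
    {γ : κ → Fin d → ℤ} (hγ : ∀ i, γ i ∈ Γ) (r : ℂ) (θ : UnitAddTorus κ) :
    (fun x => mFourier γ₀ x * (1 + r * coordSum (θ + torusHom (fun i => γ i - γ₀) x))) ∈
      Submodule.span ℂ (torusChar '' Γ) := by
  have eq_sum : (fun x => mFourier γ₀ x * (1 + r * coordSum (θ + torusHom (fun i => γ i - γ₀) x))) =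
      torusChar γ₀ + ∑ i, (r * mFourier (Pi.single i 1) θ) • torusChar (γ i) := by
    ext x
    have mFourier_mul (i : κ) : mFourier γ₀ x * mFourier (γ i - γ₀) x = mFourier (γ i) x := by
      rw [← mFourier_add, add_sub_cancel]
    simp only [coordSum_add_torusHom, torusChar_eq_mFourier, Pi.add_apply, Finset.sum_apply,
      Pi.smul_apply, smul_eq_mul, mul_add, mul_one, Finset.mul_sum, ← mFourier_mul]
    congr! 2
    ring
  rw [eq_sum]
  exact add_mem (Submodule.subset_span ⟨γ₀, hγ₀, rfl⟩) (sum_mem fun i _ =>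
    Submodule.smul_mem _ _ (Submodule.subset_span ⟨γ i, hγ i, rfl⟩))

lemma IsContractiveHp.integral_rpowGradient_add_torusHom_eq_zero (hcontr : IsContractiveHp d p Γ)
    (hΓ : Γ ⊆ NN d) (hp0 : p ≠ 0) (hpt : p ≠ ∞) {γ₀ : Fin d → ℤ} (hγ₀ : γ₀ ∈ Γ)
    {γ : κ → Fin d → ℤ} (hγ : ∀ i, γ i ∈ Γ) {n : κ → ℤ} {lam : Fin d → ℤ}
    (hn : γ₀ + ∑ i, n i • (γ i - γ₀) = lam) (hlam : lam ∈ NN d) (hlamΓ : lam ∉ Γ) {r : ℝ}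
    (hr : |r| * Fintype.card κ < 1) (θ : UnitAddTorus κ) :
    ∫ x, rpowGradient p.toReal (1 + r * coordSum (θ + torusHom (fun i => γ i - γ₀) x)) *
      mFourier n (θ + torusHom (fun i => γ i - γ₀) x) = 0 := by
  set f : Torus d → ℂ := fun x =>
    mFourier γ₀ x * (1 + r * coordSum (θ + torusHom (fun i => γ i - γ₀) x)) with f_def
  have hcoordSum := continuous_coordSum (ι := κ)
  have htorusHom := continuous_torusHom (fun i => γ i - γ₀)
  have continuous_f : Continuous f := by fun_prop
  have f_ne_zero (x : Torus d) : f x ≠ 0 :=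
    mul_ne_zero (mFourier_ne_zero _ _) (one_add_mul_coordSum_ne_zero hr _)
  have orthogonal : ∫ x, rpowGradient p.toReal (f x) * mFourier lam x = 0 :=
    integral_rpowGradient_mul_eq_zero (ENNReal.toReal_pos hp0 hpt).ne' continuous_f (by fun_prop)
      f_ne_zero fun t => (eLpNorm_le_eLpNorm_iff_integral_rpow hp0 hpt continuous_f
        (by fun_prop)).mp (hcontr.eLpNorm_le_add_smul_torusChar hΓ
          (mFourier_mul_one_add_coordSum_mem_span hγ₀ hγ r θ) hlam hlamΓ t)
  have integrand (x : Torus d) :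
      rpowGradient p.toReal (1 + r * coordSum (θ + torusHom (fun i => γ i - γ₀) x)) *
          mFourier n (θ + torusHom (fun i => γ i - γ₀) x) =
        mFourier n θ * (rpowGradient p.toReal (f x) * mFourier lam x) := by
    rw [f_def, rpowGradient_mul_of_norm_eq_one _ (norm_mFourier_apply γ₀ x), mFourier_apply_add,
      mFourier_torusHom, ← hn, mFourier_add]
    linear_combination -(rpowGradient p.toReal
      (1 + r * coordSum (θ + torusHom (fun i => γ i - γ₀) x)) * mFourier n θ *
        mFourier (∑ i, n i • (γ i - γ₀)) x) * conj_mFourier_mul_self γ₀ x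
  rw [integral_congr_ae (ae_of_all _ integrand), integral_const_mul, orthogonal, mul_zero]

lemma toReal_ne_two_mul_natCast (hp0 : p ≠ 0) (hpt : p ≠ ∞) (hp : ¬ ∃ m : ℕ, 0 < m ∧ p = 2 * m)
    (m : ℕ) : p.toReal ≠ 2 * m := by
  intro h
  have p_eq : p = 2 * m := by
    rw [← ENNReal.ofReal_toReal hpt, h, ENNReal.ofReal_mul two_pos.le, ENNReal.ofReal_ofNat,
      ENNReal.ofReal_natCast]
  rcases m.eq_zero_or_pos with rfl | hm
  · exact hp0 (by simpa using p_eq)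
  · exact hp ⟨m, hm, p_eq⟩

lemma IsContractiveHp.add_sum_zsmul_mem_of_ne_top (hcontr : IsContractiveHp d p Γ)
    (hΓ : Γ ⊆ NN d) (hp0 : p ≠ 0) (hpt : p ≠ ∞) (hp : ¬ ∃ m : ℕ, 0 < m ∧ p = 2 * m)
    {γ₀ : Fin d → ℤ} (hγ₀ : γ₀ ∈ Γ) {γ : κ → Fin d → ℤ} (hγ : ∀ i, γ i ∈ Γ) {n : κ → ℤ}
    {lam : Fin d → ℤ} (hn : γ₀ + ∑ i, n i • (γ i - γ₀) = lam) (hlam : lam ∈ NN d) : lam ∈ Γ := by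
  by_contra hlamΓ
  obtain ⟨r, moment_ne_zero, hr⟩ :=
    ((eventually_integral_rpowGradient_ne_zero (toReal_ne_two_mul_natCast hp0 hpt hp) n).and
      (eventually_nhdsWithin_of_eventually_nhds (eventually_abs_mul_card_lt_one (ι := κ)))).exists
  have hgradient := continuous_rpowGradient_one_add_coordSum (ι := κ) p.toReal hr
  exact moment_ne_zero (integral_eq_zero_of_forall_integral_add_eq_zero (μ := volume)
    (continuous_torusHom (fun i => γ i - γ₀)) (by fun_prop)
    (hcontr.integral_rpowGradient_add_torusHom_eq_zero hΓ hp0 hpt hγ₀ hγ hn hlam hlamΓ hr))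

lemma norm_sum_mFourier (γ : κ → ι → ℤ) : ‖∑ i, mFourier (γ i)‖ = Fintype.card κ := by
  refine le_antisymm ((norm_sum_le _ _).trans (by simp [mFourier_norm])) ?_
  have := (∑ i, mFourier (γ i)).norm_coe_le_norm (0 : UnitAddTorus ι)
  simpa [mFourier_apply_zero] using this

lemma IsContractiveHp.norm_le_norm_add_smul_mFourier (hcontr : IsContractiveHp d ∞ Γ)
    (hΓ : Γ ⊆ NN d) {f : C(UnitAddTorus (Fin d), ℂ)}
    (hf : ⇑f ∈ Submodule.span ℂ (torusChar '' Γ)) {lam : Fin d → ℤ} (hlam : lam ∈ NN d)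
    (hlamΓ : lam ∉ Γ) (t : ℂ) : ‖f‖ ≤ ‖f + t • mFourier lam‖ := by
  have := hcontr.eLpNorm_le_add_smul_torusChar hΓ hf hlam hlamΓ t
  rwa [torusChar_eq_mFourier, ← ContinuousMap.coe_smul, ← ContinuousMap.coe_add,
    eLpNorm_top_continuousMap, eLpNorm_top_continuousMap, enorm_le_iff_norm_le] at this

lemma IsContractiveHp.add_sum_zsmul_mem_of_eq_top (hcontr : IsContractiveHp d ∞ Γ)
    (hΓ : Γ ⊆ NN d) {γ₀ : Fin d → ℤ} (hγ₀ : γ₀ ∈ Γ) {γ : κ → Fin d → ℤ} (hγ : ∀ i, γ i ∈ Γ)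
    {n : κ → ℤ} {lam : Fin d → ℤ} (hn : γ₀ + ∑ i, n i • (γ i - γ₀) = lam) (hlam : lam ∈ NN d) :
    lam ∈ Γ := by
  by_contra notMem
  set δ : Option κ → Fin d → ℤ := fun o => o.elim γ₀ γ
  have δ_mem (o : Option κ) : δ o ∈ Γ := by
    cases o with
    | none => exact hγ₀
    | some i => exact hγ i
  set f : C(UnitAddTorus (Fin d), ℂ) := ∑ o, mFourier (δ o) with f_def
  have f_mem_span : ⇑f ∈ Submodule.span ℂ (torusChar '' Γ) := by
    rw [ContinuousMap.coe_sum]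
    exact sum_mem fun o _ => Submodule.subset_span ⟨δ o, δ_mem o, rfl⟩
  obtain ⟨x, norm_f_apply, re_nonneg⟩ := exists_norm_eq_norm_and_re_conj_mul_nonneg (f := f)
    (g := -mFourier lam) fun t _ => by
      rw [smul_neg, ← neg_smul]
      exact hcontr.norm_le_norm_add_smul_mFourier hΓ f_mem_span hlam notMem _
  rw [f_def, norm_sum_mFourier, ContinuousMap.sum_apply] at norm_f_apply
  have eq_base (o : Option κ) : mFourier (δ o) x = mFourier γ₀ x :=
    eq_of_norm_sum_eq_card (z := fun o => mFourier (δ o) x)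
      (fun o => norm_mFourier_apply (δ o) x) norm_f_apply o none
  have lam_eq_base : mFourier lam x = mFourier γ₀ x := by
    have difference_eq_one (i : κ) : mFourier (γ i - γ₀) x = 1 := by
      refine mul_left_cancel₀ (mFourier_ne_zero γ₀ x) ?_
      rw [← mFourier_add, add_sub_cancel, mul_one]
      exact eq_base (some i)
    simp only [← hn, mFourier_add, mFourier_finset_sum, mFourier_zsmul, difference_eq_one, one_zpow,
      Finset.prod_const_one, mul_one]
  have f_apply : f x = Fintype.card (Option κ) * mFourier γ₀ x := by
    rw [f_def, ContinuousMap.sum_apply]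
    simp only [eq_base, Finset.sum_const, Finset.card_univ, nsmul_eq_mul]
  have conj_mul : conj (f x) * (-mFourier lam) x = -Fintype.card (Option κ) := by
    rw [f_apply, ContinuousMap.neg_apply, lam_eq_base, map_mul, map_natCast, mul_neg, mul_assoc,
      conj_mFourier_mul_self, mul_one]
  have card_pos : (0 : ℝ) < Fintype.card (Option κ) := Nat.cast_pos.mpr Fintype.card_pos
  rw [conj_mul, Complex.neg_re, Complex.natCast_re] at re_nonneg
  linarith

lemma IsContractiveHp.exists_isCoset_eq_inter (hcontr : IsContractiveHp d p Γ)
    (hΓ : Γ ⊆ NN d) (hne : Γ.Nonempty) (hp0 : p ≠ 0) (hp : ¬ ∃ m : ℕ, 0 < m ∧ p = 2 * m) :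
    ∃ Λ : Set (Fin d → ℤ), IsCoset Λ ∧ Γ = Λ ∩ NN d := by
  obtain ⟨γ₀, hγ₀⟩ := hne
  refine ⟨_, ⟨γ₀, AddSubgroup.closure ((· - γ₀) '' Γ), rfl⟩, Set.Subset.antisymm
    (fun γ hγ => ⟨⟨γ - γ₀, AddSubgroup.subset_closure ⟨γ, hγ, rfl⟩, add_sub_cancel _ _⟩, hΓ hγ⟩) ?_⟩
  rintro _ ⟨⟨v, hv, rfl⟩, hlam⟩
  rw [← Submodule.span_int_eq_addSubgroupClosure] at hv
  obtain ⟨s, hs, n, rfl⟩ := (Submodule.mem_span_image_iff_exists_fun ℤ).mp hv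
  by_cases hpt : p = ∞
  · subst hpt
    exact hcontr.add_sum_zsmul_mem_of_eq_top hΓ hγ₀ (fun i => hs i.2) rfl hlam
  · exact hcontr.add_sum_zsmul_mem_of_ne_top hΓ hp0 hpt hp hγ₀ (fun i => hs i.2) rfl hlam

end CosetRestriction

section EvenExponents

open UnitAddTorus
open scoped ComplexConjugate

lemma pow_add_mul_sub_le_pow {a b : ℝ} (ha : 0 ≤ a) (hb : 0 ≤ b) (n : ℕ) :
    a ^ (n + 1) + (n + 1) * a ^ n * (b - a) ≤ b ^ (n + 1) := by
  induction n with
  | zero => simp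
  | succ n ih =>
    have square_nonneg : 0 ≤ (n + 1) * a ^ n * (b - a) ^ 2 := by positivity
    calc a ^ (n + 1 + 1) + ((n + 1 : ℕ) + 1) * a ^ (n + 1) * (b - a)
        ≤ (a ^ (n + 1) + (n + 1) * a ^ n * (b - a)) * b := by
          push_cast; linear_combination square_nonneg
      _ ≤ b ^ (n + 1 + 1) := by rw [pow_succ b]; gcongr

lemma norm_pow_add_re_le_norm_pow (f g : ℂ) (n : ℕ) :
    ‖g‖ ^ (2 * (n + 1)) + (2 * (n + 1) : ℕ) * (g ^ n * conj g ^ (n + 1) * (f - g)).re ≤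
      ‖f‖ ^ (2 * (n + 1)) := by
  have mul_self : g ^ n * conj g ^ (n + 1) * g = (‖g‖ ^ (2 * (n + 1)) : ℝ) := by
    rw [pow_mul, Complex.ofReal_pow, Complex.ofReal_pow, ← Complex.conj_mul' g]
    ring
  have re_le : (g ^ n * conj g ^ (n + 1) * f).re ≤ ‖g‖ ^ (2 * n + 1) * ‖f‖ := by
    refine (Complex.re_le_norm _).trans_eq ?_
    simp only [norm_mul, norm_pow, RCLike.norm_conj]
    ring
  calc ‖g‖ ^ (2 * (n + 1)) + (2 * (n + 1) : ℕ) * (g ^ n * conj g ^ (n + 1) * (f - g)).re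
      ≤ ‖g‖ ^ (2 * (n + 1)) +
          (2 * (n + 1) : ℕ) * (‖g‖ ^ (2 * n + 1) * ‖f‖ - ‖g‖ ^ (2 * (n + 1))) := by
        rw [mul_sub, mul_self, Complex.sub_re, Complex.ofReal_re]
        gcongr
    _ = ‖g‖ ^ (2 * n + 1 + 1) +
          ((2 * n + 1 : ℕ) + 1) * ‖g‖ ^ (2 * n + 1) * (‖f‖ - ‖g‖) := by
        push_cast; ring
    _ ≤ ‖f‖ ^ (2 * (n + 1)) := pow_add_mul_sub_le_pow (norm_nonneg g) (norm_nonneg f) _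

lemma integral_norm_pow_le_integral_norm_pow {X : Type*} [TopologicalSpace X] [CompactSpace X]
    [MeasurableSpace X] [OpensMeasurableSpace X] {μ : Measure X} [IsFiniteMeasure μ] {f g : X → ℂ}
    (hf : Continuous f) (hg : Continuous g) {n : ℕ}
    (h : ∫ x, g x ^ n * conj (g x) ^ (n + 1) * (f x - g x) ∂μ = 0) :
    ∫ x, ‖g x‖ ^ (2 * (n + 1)) ∂μ ≤ ∫ x, ‖f x‖ ^ (2 * (n + 1)) ∂μ := by
  have integrable : Integrable (fun x => g x ^ n * conj (g x) ^ (n + 1) * (f x - g x)) μ :=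
    integrable_of_continuous (by fun_prop)
  have integral_re_eq_zero :
      ∫ x, (g x ^ n * conj (g x) ^ (n + 1) * (f x - g x)).re ∂μ = 0 := by
    simpa only [RCLike.re_eq_complex_re, h, Complex.zero_re] using integral_re integrable
  have mono := integral_mono (μ := μ) (integrable_of_continuous (by fun_prop))
    (integrable_of_continuous (by fun_prop)) fun x => norm_pow_add_re_le_norm_pow (f x) (g x) n
  rwa [integral_add (integrable_of_continuous (by fun_prop))
    (integrable_of_continuous (by fun_prop)), integral_const_mul, integral_re_eq_zero, mul_zero,
    add_zero] at mono

variable {d : ℕ}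

lemma continuous_trigPoly (F : Finset (Fin d → ℤ)) (a : (Fin d → ℤ) → ℂ) :
    Continuous (trigPoly F a) := by
  unfold trigPoly
  simp only [torusChar_eq_mFourier]
  fun_prop

lemma isContractiveHp_two_mul_of_forall_sum_zsmul_mem {Γ : Set (Fin d → ℤ)} {n : ℕ}
    (h : ∀ s : Finset (Fin d → ℤ), ↑s ⊆ Γ → ∀ k l : (Fin d → ℤ) → ℕ,
      ∑ α ∈ s, k α = n → ∑ α ∈ s, l α = n + 1 →
      ∑ α ∈ s, ((l α : ℤ) - k α) • α ∈ NN d → ∑ α ∈ s, ((l α : ℤ) - k α) • α ∈ Γ) :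
    IsContractiveHp d (2 * (n + 1 : ℕ)) Γ := by
  intro F hF a
  have toReal_eq : (2 * (n + 1 : ℕ) : ℝ≥0∞).toReal = (2 * (n + 1) : ℕ) := by
    rw [← Nat.cast_ofNat, ← Nat.cast_mul, ENNReal.toReal_natCast]
  rw [eLpNorm_le_eLpNorm_iff_integral_rpow (by simp) (by finiteness) (continuous_trigPoly _ a)
    (continuous_trigPoly _ a), toReal_eq]
  simp only [Real.rpow_natCast]
  refine integral_norm_pow_le_integral_norm_pow (continuous_trigPoly _ a)
    (continuous_trigPoly _ a) ?_
  have sub_eq (x : Torus d) : trigPoly F a x - trigPoly (F.filter (· ∈ Γ)) a x =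
      ∑ α ∈ F.filter (· ∉ Γ), a α * mFourier α x :=
    sub_eq_of_eq_add' (Finset.sum_filter_add_sum_filter_not F (· ∈ Γ) _).symm
  have moment_eq_zero {α : Fin d → ℤ} (hα : α ∈ F.filter (· ∉ Γ)) :
      ∫ x, trigPoly (F.filter (· ∈ Γ)) a x ^ n *
        conj (trigPoly (F.filter (· ∈ Γ)) a x) ^ (n + 1) * mFourier α x = 0 := by
    obtain ⟨hαF, hαΓ⟩ := Finset.mem_filter.mp hα
    refine (integral_sum_mFourier_pow_mul_conj_pow _ a id n (n + 1) α).trans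
      (Finset.sum_eq_zero fun k hk => Finset.sum_eq_zero fun l hl => if_neg fun frequency => hαΓ ?_)
    have α_eq : ∑ β ∈ F.filter (· ∈ Γ), ((l β : ℤ) - k β) • β = α := by
      rw [← neg_eq_of_add_eq_zero_right frequency, ← Finset.sum_neg_distrib]
      simp only [id, ← neg_smul, neg_sub]
    have := h (F.filter (· ∈ Γ)) (fun β hβ => (Finset.mem_filter.mp hβ).2) k l
      (Finset.mem_piAntidiag.mp hk).1 (Finset.mem_piAntidiag.mp hl).1
    rw [α_eq] at this
    exact this (hF hαF)
  have hcont := continuous_trigPoly (F.filter (· ∈ Γ)) a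
  simp only [sub_eq, Finset.mul_sum, mul_left_comm _ (a _)]
  rw [integral_finsetSum _ fun α _ => integrable_of_continuous (by fun_prop)]
  exact Finset.sum_eq_zero fun α hα => by rw [integral_const_mul, moment_eq_zero hα, mul_zero]

lemma isContractiveHp_two_mul_range_of_forall_sum_smul_mem {κ : Type*} [Fintype κ]
    {γ : κ → Fin d → ℤ} (hγ : Function.Injective γ) {n : ℕ}
    (h : ∀ m : κ → ℤ, (∀ i, |m i| ≤ n + 1) → ∑ i, m i = 1 → ∑ i, m i • γ i ∈ NN d →
      ∑ i, m i • γ i ∈ Set.range γ) :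
    IsContractiveHp d (2 * (n + 1 : ℕ)) (Set.range γ) := by
  refine isContractiveHp_two_mul_of_forall_sum_zsmul_mem fun s hs k l hk hl => ?_
  have sum_eq {M : Type} [AddCommMonoid M] (f : (Fin d → ℤ) → M) :
      ∑ α ∈ s, f α = ∑ i, if γ i ∈ s then f (γ i) else 0 := by
    rw [← Finset.sum_preimage γ s hγ.injOn f fun α hα hα' => absurd (hs hα) hα']
    rw [← Finset.sum_filter]
    exact Finset.sum_congr (by ext; simp) fun _ _ => rfl
  let m (i : κ) : ℤ := if γ i ∈ s then (l (γ i) : ℤ) - k (γ i) else 0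
  have sum_smul_eq : ∑ α ∈ s, ((l α : ℤ) - k α) • α = ∑ i, m i • γ i := by
    simp only [sum_eq, m, ite_smul, zero_smul]
  have abs_le (i : κ) : |m i| ≤ n + 1 := by
    simp only [m]
    split_ifs with hi
    · have k_le : k (γ i) ≤ n := hk ▸ Finset.single_le_sum (fun _ _ => Nat.zero_le _) hi
      have l_le : l (γ i) ≤ n + 1 := hl ▸ Finset.single_le_sum (fun _ _ => Nat.zero_le _) hi
      rw [abs_le]
      lia
    · simp; lia
  rw [sum_smul_eq]
  refine h m abs_le ?_
  rw [← sum_eq fun α => (l α : ℤ) - k α, Finset.sum_sub_distrib, ← Nat.cast_sum, ← Nat.cast_sum,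
    hk, hl]
  simp

end EvenExponents

section Counterexample

open scoped Matrix

lemma eq_zero_of_mul_le_of_le_mul_add_one {a x y : ℤ} (hx : |x| + 2 ≤ a) (h₀ : a * y ≤ x)
    (h₁ : x ≤ a * y + 1) : y = 0 := by
  obtain ⟨neg_le, le⟩ := abs_le.mp (le_sub_iff_add_le.mpr hx)
  have a_pos : 0 < a := by linarith [abs_nonneg x]
  have lt_one : y < 1 := lt_of_mul_lt_mul_left (show a * y < a * 1 by linarith) a_pos.le
  have neg_one_lt : -1 < y := lt_of_mul_lt_mul_left (show a * -1 < a * y by linarith) a_pos.le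
  linarith

lemma exists_eq_single_of_sum_eq_one {κ : Type*} [Fintype κ] [DecidableEq κ] {m : κ → ℤ}
    (hm : 0 ≤ m) (hsum : ∑ i, m i = 1) : ∃ i, m = Pi.single i 1 := by
  obtain ⟨i, -, hi⟩ := Finset.exists_ne_zero_of_sum_ne_zero (hsum.trans_ne one_ne_zero)
  have single_le : Pi.single i 1 ≤ m :=
    update_le_iff.mpr ⟨Order.one_le_iff_pos.mpr ((hm i).lt_of_ne' hi), fun j _ => hm j⟩
  have single_eq := (Finset.sum_eq_sum_iff_of_le (s := Finset.univ) fun j _ => single_le j).mp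
    (by simp [hsum])
  exact ⟨i, funext fun j => (single_eq j (Finset.mem_univ j)).symm⟩

lemma IsCoset.sum_smul_mem {κ : Type*} [Fintype κ] {d : ℕ} {Λ : Set (Fin d → ℤ)}
    (hΛ : IsCoset Λ) {m : κ → ℤ} {γ : κ → Fin d → ℤ} (hm : ∑ i, m i = 1) (hγ : ∀ i, γ i ∈ Λ) :
    ∑ i, m i • γ i ∈ Λ := by
  obtain ⟨x, H, rfl⟩ := hΛ
  choose η hη γ_eq using hγ
  refine ⟨∑ i, m i • η i, sum_mem fun i _ => H.zsmul_mem (hη i) _, ?_⟩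
  simp only [← γ_eq, smul_add, Finset.sum_add_distrib, ← Finset.sum_smul, hm, one_smul]

lemma hasDim_range_of_affineIndependent {κ : Type*} [Fintype κ] {d : ℕ} {γ : κ → Fin d → ℤ}
    (hγ : AffineIndependent ℤ γ) : HasDim (Set.range γ) (Fintype.card κ - 1) := by
  rintro _ ⟨i₀, rfl⟩
  have linearIndependent := (affineIndependent_iff_linearIndependent_vsub ℤ γ i₀).mp hγ
  have span_eq := (vectorSpan_eq_span_vsub_set_right ℤ (Set.mem_range_self i₀)).symm.trans
    (vectorSpan_range_eq_span_range_vsub_right_ne ℤ γ i₀)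
  exact (congrArg (fun S : Submodule ℤ (Fin d → ℤ) => Module.finrank ℤ S) span_eq).trans
    ((finrank_span_eq_card linearIndependent).trans (by simp))

/-- Four points of `ℕ₀⁴`, the rows. An affine combination of them with coefficients of modulus at
most `a - 2` lies in `ℕ₀⁴` only if it is one of the four, but larger coefficients give further
points of `ℕ₀⁴`. -/
def baseMatrix (a : ℤ) : Matrix (Fin 4) (Fin 4) ℤ :=
  !![0, 1, a ^ 2, 1 + a ^ 2;
    1, 0, a ^ 2 - a, 1 + a ^ 2 + a;
    a ^ 2, 1 + a ^ 2, 0, 1;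
    a ^ 2 - a, 1 + a ^ 2 + a, 1, 0]

lemma vecMul_baseMatrix (a : ℤ) (m : Fin 4 → ℤ) :
    m ᵥ* baseMatrix a =
      ![m 1 + a ^ 2 * (m 2 + m 3) - a * m 3,
        m 0 + (1 + a ^ 2) * (m 2 + m 3) + a * m 3,
        a ^ 2 * (m 0 + m 1) - a * m 1 + m 3,
        (1 + a ^ 2) * (m 0 + m 1) + a * m 1 + m 2] := by
  ext c
  fin_cases c <;> simp [Matrix.vecMul, dotProduct, Fin.sum_univ_four, baseMatrix] <;> ring

lemma sum_vecMul_baseMatrix (a : ℤ) (m : Fin 4 → ℤ) :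
    ∑ c, (m ᵥ* baseMatrix a) c = (2 + 2 * a ^ 2) * ∑ i, m i := by
  simp only [vecMul_baseMatrix, Fin.sum_univ_four, Matrix.cons_val]
  ring

lemma nonneg_of_sq_mul_sub_mul_add_nonneg {a t x y : ℤ} (hx : |x| + 2 ≤ a) (hy : |y| + 2 ≤ a)
    (h : 0 ≤ a ^ 2 * t - a * x + y) : 0 ≤ t := by
  obtain ⟨neg_le_x, -⟩ := abs_le.mp (le_sub_iff_add_le.mpr hx)
  obtain ⟨-, y_le⟩ := abs_le.mp (le_sub_iff_add_le.mpr hy)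
  have a_pos : 0 < a := by linarith [abs_nonneg x]
  by_contra! t_neg
  nlinarith [mul_le_mul_of_nonneg_left neg_le_x a_pos.le,
    mul_le_mul_of_nonneg_left (show t ≤ -1 by lia) (sq_nonneg a)]

variable {a : ℤ} {m : Fin 4 → ℤ}

lemma add_nonneg_of_vecMul_baseMatrix_nonneg (hm : ∀ i, |m i| + 2 ≤ a)
    (h₀ : 0 ≤ (m ᵥ* baseMatrix a) 0) (h₂ : 0 ≤ (m ᵥ* baseMatrix a) 2) :
    0 ≤ m 0 + m 1 ∧ 0 ≤ m 2 + m 3 := by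
  rw [vecMul_baseMatrix] at h₀ h₂
  exact ⟨nonneg_of_sq_mul_sub_mul_add_nonneg (hm 1) (hm 3) h₂,
    nonneg_of_sq_mul_sub_mul_add_nonneg (hm 3) (hm 1) (h₀.trans_eq (by simp; ring))⟩

lemma eq_zero_of_vecMul_baseMatrix_nonneg (hm : ∀ i, |m i| + 2 ≤ a) (hsum : ∑ i, m i ≤ 0)
    (h₀ : 0 ≤ (m ᵥ* baseMatrix a) 0) (h₁ : 0 ≤ (m ᵥ* baseMatrix a) 1)
    (h₂ : 0 ≤ (m ᵥ* baseMatrix a) 2) : m = 0 := by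
  obtain ⟨nonneg₀₁, nonneg₂₃⟩ := add_nonneg_of_vecMul_baseMatrix_nonneg hm h₀ h₂
  rw [Fin.sum_univ_four] at hsum
  have add₀₁ : m 0 + m 1 = 0 := by lia
  have add₂₃ : m 2 + m 3 = 0 := by lia
  simp only [vecMul_baseMatrix, Matrix.cons_val, add₀₁, add₂₃, mul_zero, add_zero, zero_sub]
    at h₀ h₁ h₂
  have m₃ : m 3 = 0 := eq_zero_of_mul_le_of_le_mul_add_one (hm 1) (by lia) (by lia)
  rw [m₃] at h₀ h₁ h₂
  have m₁ : m 1 = 0 := by lia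
  ext i
  fin_cases i <;> simp only [Pi.zero_apply] <;> lia

lemma nonneg_of_vecMul_baseMatrix_nonneg (hm : ∀ i, |m i| + 2 ≤ a) (hsum : ∑ i, m i = 1)
    (h : ∀ c, 0 ≤ (m ᵥ* baseMatrix a) c) : 0 ≤ m := by
  have h₀ := h 0
  have h₁ := h 1
  have h₂ := h 2
  have h₃ := h 3
  obtain ⟨nonneg₀₁, nonneg₂₃⟩ := add_nonneg_of_vecMul_baseMatrix_nonneg hm h₀ h₂
  rw [Fin.sum_univ_four] at hsum
  simp only [vecMul_baseMatrix, Matrix.cons_val] at h₀ h₁ h₂ h₃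
  suffices 0 ≤ m 0 ∧ 0 ≤ m 1 ∧ 0 ≤ m 2 ∧ 0 ≤ m 3 by
    intro i
    fin_cases i <;> simp [this]
  obtain ⟨add₀₁, add₂₃⟩ | ⟨add₀₁, add₂₃⟩ :
      m 0 + m 1 = 1 ∧ m 2 + m 3 = 0 ∨ m 0 + m 1 = 0 ∧ m 2 + m 3 = 1 := by lia
  · rw [add₂₃] at h₀ h₁
    have m₃ : m 3 = 0 := eq_zero_of_mul_le_of_le_mul_add_one (hm 1) (by lia) (by lia)
    rw [m₃] at h₀ h₁
    lia
  · rw [add₀₁] at h₂ h₃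
    have m₁ : m 1 = 0 := eq_zero_of_mul_le_of_le_mul_add_one (hm 3) (by lia) (by lia)
    rw [m₁] at h₂ h₃
    lia

lemma eq_zero_of_vecMul_baseMatrix_eq_zero (ha : 2 ≤ a) (hsum : ∑ i, m i = 0)
    (h₀ : (m ᵥ* baseMatrix a) 0 = 0) (h₁ : (m ᵥ* baseMatrix a) 1 = 0)
    (h₂ : (m ᵥ* baseMatrix a) 2 = 0) : m = 0 := by
  rw [Fin.sum_univ_four] at hsum
  simp only [vecMul_baseMatrix, Matrix.cons_val] at h₀ h₁ h₂
  have add₂₃ : m 2 + m 3 = 0 :=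
    (mul_eq_zero_iff_left (show 2 * a ^ 2 ≠ 0 by positivity)).mp
      (by linear_combination h₀ + h₁ - hsum)
  have add₀₁ : m 0 + m 1 = 0 := by lia
  rw [add₂₃] at h₀
  rw [add₀₁] at h₂
  have m₁ : m 1 = 0 :=
    (mul_eq_zero_iff_left (show a ^ 2 - 1 ≠ 0 by nlinarith)).mp
      (by linear_combination -h₀ - a * h₂)
  have m₃ : m 3 = 0 := by lia
  ext i
  fin_cases i <;> simp only [Pi.zero_apply] <;> lia

lemma vecMul_baseMatrix_three_lt (hm : ∀ i, |m i| + 2 ≤ a) :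
    (m ᵥ* baseMatrix a) 3 < a * (2 * a ^ 2 + a + 3) := by
  have lt (i : Fin 4) : m i < a := by linarith [le_abs_self (m i), hm i]
  have a_pos : 0 < a := by linarith [abs_nonneg (m 0), hm 0]
  calc (m ᵥ* baseMatrix a) 3 = (1 + a ^ 2) * m 0 + (1 + a ^ 2 + a) * m 1 + m 2 := by
        simp only [vecMul_baseMatrix, Matrix.cons_val]; ring
    _ < (1 + a ^ 2) * a + (1 + a ^ 2 + a) * a + a :=
        add_lt_add_of_le_of_lt (by gcongr <;> exact (lt _).le) (lt 2)
    _ = a * (2 * a ^ 2 + a + 3) := by ring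

/-- The rows of `baseMatrix a` in the first four coordinates, together with a point far out on each
of the `s` coordinate axes from the fourth one on. The fourth axis is among them, so that the
dimension `s + 3` can be as large as `d`. -/
def counterexamplePoint (d : ℕ) {s : ℕ} (a : ℤ) : Fin 4 ⊕ Fin s → Fin d → ℤ
  | .inl i, c => if h : c.val < 4 then baseMatrix a i ⟨c, h⟩ else 0
  | .inr j, c => if c.val = j + 3 then a * (2 * a ^ 2 + a + 3) else 0

variable {d s : ℕ} {m : Fin 4 ⊕ Fin s → ℤ}

lemma counterexamplePoint_mem_NN (ha : 1 ≤ a) (i : Fin 4 ⊕ Fin s) :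
    counterexamplePoint d a i ∈ NN d := by
  intro c
  have sub_nonneg : 0 ≤ a ^ 2 - a := by nlinarith
  rcases i with i | j <;> simp only [counterexamplePoint]
  · split_ifs with h
    · generalize (⟨c, h⟩ : Fin 4) = c'
      fin_cases i <;> fin_cases c' <;> simp [baseMatrix] <;> nlinarith
    · exact le_rfl
  · split_ifs <;> positivity

lemma sum_smul_counterexamplePoint_castLE (hd : 4 ≤ d) (c : Fin 4) :
    (∑ i, m i • counterexamplePoint d a i) (Fin.castLE hd c) =
      ((m ∘ Sum.inl) ᵥ* baseMatrix a) c +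
        ∑ j : Fin s, if c.val = j + 3 then m (.inr j) * (a * (2 * a ^ 2 + a + 3)) else 0 := by
  simp [counterexamplePoint, Fintype.sum_sum_type, Matrix.vecMul, dotProduct]

lemma sum_smul_counterexamplePoint_add_three (hsd : s + 3 ≤ d) (j : Fin s) :
    (∑ i, m i • counterexamplePoint d a i) ⟨j + 3, by lia⟩ =
      (if j.val = 0 then ((m ∘ Sum.inl) ᵥ* baseMatrix a) 3 else 0) +
        m (.inr j) * (a * (2 * a ^ 2 + a + 3)) := by
  simp only [Finset.sum_apply, Fintype.sum_sum_type, Pi.smul_apply, smul_eq_mul,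
    counterexamplePoint]
  congr 1
  · by_cases h : j.val = 0
    · simp [h, Matrix.vecMul, dotProduct]
    · simp [h, show ¬j.val + 3 < 4 by lia]
  · simp [Fin.val_inj]

lemma nonneg_inr_of_sum_smul_counterexamplePoint_mem_NN (hsd : s + 3 ≤ d)
    (hm : ∀ i, |m i| + 2 ≤ a) (h : ∑ i, m i • counterexamplePoint d a i ∈ NN d) (j : Fin s) :
    0 ≤ m (.inr j) := by
  have nonneg := h ⟨j + 3, by lia⟩
  rw [sum_smul_counterexamplePoint_add_three hsd] at nonneg
  have a_pos : 0 < a := by linarith [abs_nonneg (m (.inr j)), hm (.inr j)]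
  have weight_pos : 0 < a * (2 * a ^ 2 + a + 3) := by positivity
  have base_lt :
      (if j.val = 0 then ((m ∘ Sum.inl) ᵥ* baseMatrix a) 3 else 0) < a * (2 * a ^ 2 + a + 3) := by
    split_ifs
    · exact vecMul_baseMatrix_three_lt fun i => hm (.inl i)
    · exact weight_pos
  by_contra! neg
  nlinarith

lemma exists_eq_single_of_sum_smul_counterexamplePoint_mem_NN (hd : 4 ≤ d) (hsd : s + 3 ≤ d)
    (hm : ∀ i, |m i| + 2 ≤ a) (hsum : ∑ i, m i = 1)
    (h : ∑ i, m i • counterexamplePoint d a i ∈ NN d) : ∃ i, m = Pi.single i 1 := by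
  have inr_nonneg := nonneg_inr_of_sum_smul_counterexamplePoint_mem_NN hsd hm h
  have castLE_nonneg (c : Fin 4) := (sum_smul_counterexamplePoint_castLE hd c).subst
    (motive := (0 ≤ ·)) (h (Fin.castLE hd c))
  have inl_add_inr := (Fintype.sum_sum_type m).symm.trans hsum
  refine exists_eq_single_of_sum_eq_one (fun i => i.rec (fun i => ?_) inr_nonneg) hsum
  obtain inr_sum | inr_sum := (Finset.sum_nonneg fun j _ => inr_nonneg j).eq_or_lt
  · have inr_eq_zero (j : Fin s) : m (.inr j) = 0 :=
      (Finset.sum_eq_zero_iff_of_nonneg fun j _ => inr_nonneg j).mp inr_sum.symm j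
        (Finset.mem_univ j)
    exact nonneg_of_vecMul_baseMatrix_nonneg (m := m ∘ Sum.inl) (fun i => hm (.inl i))
      (by simpa [inr_eq_zero] using inl_add_inr) (by simpa [inr_eq_zero] using castLE_nonneg) i
  · have inl_eq_zero := eq_zero_of_vecMul_baseMatrix_nonneg (m := m ∘ Sum.inl)
      (fun i => hm (.inl i)) (by simp only [Function.comp_apply]; lia)
      (by simpa using castLE_nonneg 0) (by simpa using castLE_nonneg 1)
      (by simpa using castLE_nonneg 2)
    exact (congrFun inl_eq_zero i).ge

lemma inr_eq_zero_of_sum_smul_counterexamplePoint_eq_zero (hd : 4 ≤ d) (hsd : s + 3 ≤ d)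
    (ha : 2 ≤ a) (hsum : ∑ i, m i = 0) (h : ∑ i, m i • counterexamplePoint d a i = 0)
    (j : Fin s) : m (.inr j) = 0 := by
  have inr_eq_zero_of_ne (j : Fin s) (hj : j.val ≠ 0) : m (.inr j) = 0 := by
    have := (sum_smul_counterexamplePoint_add_three hsd j).symm.trans (congrFun h _)
    simpa [hj, (show 0 < a by lia).ne', (show 2 * a ^ 2 + a + 3 ≠ 0 by positivity)] using this
  have total : (2 + 2 * a ^ 2) * ∑ i, m (.inl i) +
      (∑ j, m (.inr j)) * (a * (2 * a ^ 2 + a + 3)) = 0 := by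
    have sum_eq_zero := Finset.sum_eq_zero fun c (_ : c ∈ Finset.univ) =>
      (sum_smul_counterexamplePoint_castLE hd c).symm.trans (congrFun h _)
    rw [Finset.sum_add_distrib, sum_vecMul_baseMatrix, Finset.sum_comm] at sum_eq_zero
    rw [← sum_eq_zero, Finset.sum_mul]
    refine congrArg _ (Finset.sum_congr rfl fun j _ => ?_)
    rcases eq_or_ne j.val 0 with hj | hj
    · simp [Fin.sum_univ_four, hj]
    · simp [inr_eq_zero_of_ne j hj]
  have sum_inr_eq_zero : ∑ j, m (.inr j) = 0 := by
    have weight_gt : 2 + 2 * a ^ 2 < a * (2 * a ^ 2 + a + 3) := by nlinarith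
    rw [Fintype.sum_sum_type] at hsum
    exact (mul_eq_zero_iff_left (sub_pos.mpr weight_gt).ne').mp
      (by linear_combination total - (2 + 2 * a ^ 2) * hsum)
  by_cases hj : j.val = 0
  · rw [← sum_inr_eq_zero]
    refine (Fintype.sum_eq_single j fun i hi => inr_eq_zero_of_ne i fun hi₀ => hi ?_).symm
    exact Fin.ext (hi₀.trans hj.symm)
  · exact inr_eq_zero_of_ne j hj

lemma affineIndependent_counterexamplePoint (hd : 4 ≤ d) (hsd : s + 3 ≤ d) (ha : 2 ≤ a) :
    AffineIndependent ℤ (counterexamplePoint d (s := s) a) := by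
  refine (affineIndependent_iff_of_fintype _ _).mpr fun m hsum h => ?_
  rw [Finset.weightedVSub_eq_linear_combination _ hsum] at h
  have castLE_eq_zero (c : Fin 4) := (sum_smul_counterexamplePoint_castLE hd c).symm.trans
    (congrFun h _)
  have inr_eq_zero := inr_eq_zero_of_sum_smul_counterexamplePoint_eq_zero hd hsd ha hsum h
  have inl_eq_zero := eq_zero_of_vecMul_baseMatrix_eq_zero (m := m ∘ Sum.inl) ha
    (by simpa [inr_eq_zero] using hsum) (by simpa using castLE_eq_zero 0)
    (by simpa using castLE_eq_zero 1) (by simpa using castLE_eq_zero 2)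
  exact fun i => i.rec (congrFun inl_eq_zero) inr_eq_zero

lemma not_exists_isCoset_range_counterexamplePoint (hd : 4 ≤ d) (ha : 2 ≤ a) :
    ¬∃ Λ : Set (Fin d → ℤ), IsCoset Λ ∧
      Set.range (counterexamplePoint d (s := s) a) = Λ ∩ NN d := by
  rintro ⟨Λ, hΛ, range_eq⟩
  let m : Fin 4 ⊕ Fin s → ℤ := Sum.elim ![1 - a, a, -1, 1] 0
  have coord_castLE (c : Fin 4) :
      (∑ i, m i • counterexamplePoint d a i) (Fin.castLE hd c) = ![0, 1, 1, 2 * a ^ 2] c := by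
    rw [sum_smul_counterexamplePoint_castLE]
    fin_cases c <;> simp [m, vecMul_baseMatrix] <;> ring
  have mem_NN : ∑ i, m i • counterexamplePoint d a i ∈ NN d := by
    intro c
    by_cases hc : c.val < 4
    · rw [show c = Fin.castLE hd ⟨c, hc⟩ from rfl, coord_castLE]
      generalize (⟨c, hc⟩ : Fin 4) = c'
      fin_cases c' <;> simp [sq_nonneg]
    · simp [m, counterexamplePoint, hc]
  have mem : ∑ i, m i • counterexamplePoint d a i ∈ Λ :=
    hΛ.sum_smul_mem (by simp [m, Fin.sum_univ_four]) fun i =>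
      (range_eq.subset (Set.mem_range_self i)).1
  obtain ⟨i | j, hi⟩ := range_eq.superset ⟨mem, mem_NN⟩
  · have h₀ := (congrFun hi _).trans (coord_castLE 0)
    have h₂ := (congrFun hi _).trans (coord_castLE 2)
    have sub_ne_zero : a ^ 2 - a ≠ 0 := by nlinarith
    fin_cases i <;> simp [counterexamplePoint, baseMatrix] at h₀ h₂ <;> lia
  · have h₁ := (congrFun hi _).trans (coord_castLE 1)
    simp [counterexamplePoint] at h₁

lemma isContractiveHp_range_counterexamplePoint (hd : 4 ≤ d) (hsd : s + 3 ≤ d) (n : ℕ) :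
    IsContractiveHp d (2 * (n + 1 : ℕ))
      (Set.range (counterexamplePoint d (s := s) (n + 3))) := by
  refine isContractiveHp_two_mul_range_of_forall_sum_smul_mem
    (affineIndependent_counterexamplePoint hd hsd (by lia)).injective fun m hm hsum h => ?_
  obtain ⟨i, rfl⟩ := exists_eq_single_of_sum_smul_counterexamplePoint_mem_NN hd hsd
    (fun i => by linarith [hm i]) hsum h
  exact ⟨i, by simp [Pi.single_apply, ite_smul]⟩

lemma not_contractiveRestrictionProperty_two_mul {k : ℕ} (hd : 4 ≤ d) (hk : 3 ≤ k) (hkd : k ≤ d)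
    (n : ℕ) : ¬ContractiveRestrictionProperty d (2 * (n + 1 : ℕ)) k := by
  obtain ⟨s, rfl⟩ := Nat.exists_eq_add_of_le' hk
  intro h
  refine not_exists_isCoset_range_counterexamplePoint (s := s) (a := n + 3) hd (by lia) <|
    h _ (Set.range_nonempty _) (Set.range_subset_iff.mpr (counterexamplePoint_mem_NN (by lia))) ?_
      (isContractiveHp_range_counterexamplePoint hd hkd n)
  simpa [add_comm] using
    hasDim_range_of_affineIndependent
      (affineIndependent_counterexamplePoint hd hkd (a := n + 3) (by lia))

end Counterexample

theorem contractive_restriction_property_c_general (d k : ℕ) (hd : 4 ≤ d) (hk : 3 ≤ k)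
    (hkd : k ≤ d) (p : ℝ≥0∞) (hp : p ≠ 0) :
    ContractiveRestrictionProperty d p k ↔ ¬ ∃ m : ℕ, 0 < m ∧ p = 2 * m := by
  constructor
  · rintro h ⟨m, hm, rfl⟩
    obtain ⟨n, rfl⟩ := Nat.exists_eq_add_one.mpr hm
    exact not_contractiveRestrictionProperty_two_mul hd hk hkd n h
  · intro hp_even Γ hne hΓ _ hcontr
    exact hcontr.exists_isCoset_eq_inter hΓ hne hp hp_even

/-- Theorem 2 (c): if `d ≥ 4` and `3 ≤ k ≤ d`, then `H^p(𝕋^d)` enjoys the contractive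
restriction property of dimension `k` iff `p` is not an even integer. -/
theorem contractive_restriction_property_c (d k : ℕ) (hd : 4 ≤ d) (hk : 3 ≤ k)
    (hkd : k ≤ d) (p : ℝ≥0∞) (hp : 1 ≤ p) :
    ContractiveRestrictionProperty d p k ↔ ¬ ∃ m : ℕ, 0 < m ∧ p = 2 * m :=
  contractive_restriction_property_c_general d k hd hk hkd p (one_pos.trans_le hp).ne'

end
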